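/- arXiv:1508.00777 — 6 statements merged into one kernel-verified Lean document; each statement's English description precedes it below -/
import Mathlib

section
/- Let V be a finite set with |V| = n and let F be a set of edges (2-element subsets of V). Then there is a set of edges F₀ such that δF₀ = δF and |F₀| ≤ 3·|δF|. -/
/-- The set of edges (2-element subsets) of a finite vertex set `V`. -/
def edgesOn (V : Type*) [Fintype V] [DecidableEq V] : Finset (Finset V) :=
  Finset.univ.powersetCard 2

/-- The set of triangles (3-element subsets) of a finite vertex set `V`. -/
def trianglesOn (V : Type*) [Fintype V] [DecidableEq V] : Finset (Finset V) :=
  Finset.univ.powersetCard 3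

/-- Coboundary of a set of edges: the triangles containing an odd number of
edges of `F`. -/
def cobE {V : Type*} [Fintype V] [DecidableEq V] (F : Finset (Finset V)) :
    Finset (Finset V) :=
  (trianglesOn V).filter (fun t => Odd ((F.filter (· ⊆ t)).card))


/-- Membership of a triangle in the coboundary, in terms of its three edges. -/
theorem mem_cobE_triple {V : Type*} [Fintype V] [DecidableEq V] {F : Finset (Finset V)}
    (hF : F ⊆ edgesOn V) {a b c : V} (hab : a ≠ b) (hac : a ≠ c) (hbc : b ≠ c) :
    {a, b, c} ∈ cobE F ↔ Xor ({a, b} ∈ F) (Xor ({a, c} ∈ F) ({b, c} ∈ F)) := by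
  have hfilter : F.filter (· ⊆ {a, b, c}) =
      ({{a, b}, {a, c}, {b, c}} : Finset (Finset V)).filter (· ∈ F) := by
    ext e
    simp only [Finset.mem_filter, Finset.mem_insert, Finset.mem_singleton]
    rw [and_comm]
    refine and_congr_left fun he => ⟨fun hsub => ?_, ?_⟩
    · obtain ⟨x, y, hxy, rfl⟩ := Finset.card_eq_two.1 (Finset.mem_powersetCard.1 (hF he)).2
      have hx : x ∈ ({a, b, c} : Finset V) := hsub (by simp)
      have hy : y ∈ ({a, b, c} : Finset V) := hsub (by simp)
      simp only [Finset.mem_insert, Finset.mem_singleton] at hx hy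
      rcases hx with rfl | rfl | rfl <;> rcases hy with rfl | rfl | rfl <;>
        simp_all [Finset.pair_comm]
    · rintro (rfl | rfl | rfl) <;> intro x <;> simp <;> tauto
  have hne₁ : ({a, b} : Finset V) ≠ {a, c} := fun h => by
    have : b ∈ ({a, c} : Finset V) := h ▸ by simp
    simp_all [eq_comm]
  have hne₂ : ({a, b} : Finset V) ≠ {b, c} := fun h => by
    have : a ∈ ({b, c} : Finset V) := h ▸ by simp
    simp_all
  have hne₃ : ({a, c} : Finset V) ≠ {b, c} := fun h => by
    have : a ∈ ({b, c} : Finset V) := h ▸ by simp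
    simp_all
  have htri : ({a, b, c} : Finset V) ∈ trianglesOn V :=
    Finset.mem_powersetCard.2 ⟨Finset.subset_univ _, Finset.card_eq_three.2
      ⟨a, b, c, hab, hac, hbc, rfl⟩⟩
  rw [cobE, Finset.mem_filter, hfilter, Finset.card_filter,
    Finset.sum_insert (by simp [hne₁, hne₂]), Finset.sum_insert (by simp [hne₃]),
    Finset.sum_singleton]
  simp only [htri, true_and]
  by_cases h₁ : {a, b} ∈ F <;> by_cases h₂ : {a, c} ∈ F <;> by_cases h₃ : {b, c} ∈ F <;>
    simp +decide [h₁, h₂, h₃, Xor]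

/-- The link of a vertex `v` in a family `T`: the edges avoiding `v` whose join with `v`
lies in `T`. -/
def linkEdges {V : Type*} [Fintype V] [DecidableEq V] (T : Finset (Finset V)) (v : V) :
    Finset (Finset V) :=
  (edgesOn V).filter fun e => v ∉ e ∧ insert v e ∈ T

theorem linkEdges_subset {V : Type*} [Fintype V] [DecidableEq V] (T : Finset (Finset V)) (v : V) :
    linkEdges T v ⊆ edgesOn V :=
  Finset.filter_subset _ _

theorem card_linkEdges_le {V : Type*} [Fintype V] [DecidableEq V] (T : Finset (Finset V))
    (v : V) : (linkEdges T v).card ≤ T.card := by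
  refine Finset.card_le_card_of_injOn (insert v) (fun e he => (Finset.mem_filter.1 he).2.2) ?_
  intro e he f hf hef
  rw [← Finset.erase_insert (Finset.mem_filter.1 he).2.1, hef,
    Finset.erase_insert (Finset.mem_filter.1 hf).2.1]

theorem pair_mem_linkEdges {V : Type*} [Fintype V] [DecidableEq V] {T : Finset (Finset V)}
    {v a b : V} (hab : a ≠ b) :
    {a, b} ∈ linkEdges T v ↔ v ≠ a ∧ v ≠ b ∧ {v, a, b} ∈ T := by
  have : ({a, b} : Finset V) ∈ edgesOn V :=
    Finset.mem_powersetCard.2 ⟨Finset.subset_univ _, Finset.card_pair hab⟩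
  simp [linkEdges, this, and_assoc]

/-- The link of a vertex in the coboundary of `F` has the same coboundary as `F`. -/
theorem cobE_linkEdges_cobE {V : Type*} [Fintype V] [DecidableEq V] {F : Finset (Finset V)}
    (hF : F ⊆ edgesOn V) (v : V) : cobE (linkEdges (cobE F) v) = cobE F := by
  ext t
  by_cases ht : t ∈ trianglesOn V
  swap
  · exact iff_of_false (fun h => ht (Finset.mem_filter.1 h).1)
      fun h => ht (Finset.mem_filter.1 h).1
  obtain ⟨a, b, c, hab, hac, hbc, rfl⟩ :=
    Finset.card_eq_three.1 (Finset.mem_powersetCard.1 ht).2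
  rw [mem_cobE_triple (linkEdges_subset _ v) hab hac hbc, pair_mem_linkEdges hab,
    pair_mem_linkEdges hac, pair_mem_linkEdges hbc]
  by_cases hva : v = a
  · subst hva
    simp [hab, hac, Xor]
  by_cases hvb : v = b
  · subst hvb
    simp [hva, hbc, Finset.insert_comm v a, Xor]
  by_cases hvc : v = c
  · subst hvc
    have : ({a, b, v} : Finset V) = {v, a, b} := by
      ext x; simp; tauto
    simp [hva, hvb, this, Xor]
  rw [mem_cobE_triple hF hva hvb hab, mem_cobE_triple hF hva hvc hac,
    mem_cobE_triple hF hvb hvc hbc, mem_cobE_triple hF hab hac hbc]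
  simp only [ne_eq, hva, hvb, hvc, not_false_eq_true, true_and, Xor]
  grind

theorem stmt_4 {V : Type*} [Fintype V] [DecidableEq V]
    (F : Finset (Finset V)) (hF : F ⊆ edgesOn V) :
    ∃ F₀ : Finset (Finset V), F₀ ⊆ edgesOn V ∧ cobE F₀ = cobE F ∧
      F₀.card ≤ 3 * (cobE F).card := by
  rcases isEmpty_or_nonempty V with hV | ⟨⟨v⟩⟩
  · refine ⟨F, hF, rfl, ?_⟩
    have : F = ∅ := Finset.subset_empty.1 (hF.trans (by simp [edgesOn]))
    simp [this]
  · exact ⟨linkEdges (cobE F) v, linkEdges_subset _ v, cobE_linkEdges_cobE hF v,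
      (card_linkEdges_le _ v).trans (by omega)⟩
end

section
/- Let V be a finite set with |V| = n ≥ 2, let p be a probability distribution on V, and let U ⊆ V satisfy ∅ ≠ U ≠ V. Then there is a subset U₀ ⊆ V such that δU₀ = δU and p(U₀) < p(δU). -/
/-- Coboundary of a set of vertices: the edges meeting `U` in an odd number
of elements. -/
def cobV {V : Type*} [Fintype V] [DecidableEq V] (U : Finset V) :
    Finset (Finset V) :=
  (edgesOn V).filter (fun e => Odd (e ∩ U).card)

theorem cobV_compl {V : Type*} [Fintype V] [DecidableEq V] (U : Finset V) :
    cobV Uᶜ = cobV U := by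
  refine Finset.filter_congr fun e he => ?_
  have he2 : e.card = 2 := (Finset.mem_powersetCard.mp he).2
  have h := Finset.card_inter_add_card_sdiff e U
  rw [Finset.sdiff_eq_inter_compl] at h
  simp only [Nat.odd_iff]
  omega

theorem mem_cobV_iff {V : Type*} [Fintype V] [DecidableEq V] {U e : Finset V} :
    e ∈ cobV U ↔ ∃ u ∈ U, ∃ v ∈ Uᶜ, {u, v} = e := by
  simp only [cobV, edgesOn, Finset.mem_filter, Finset.mem_powersetCard, Finset.subset_univ,
    true_and, Finset.mem_compl]
  constructor
  · rintro ⟨he, hodd⟩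
    obtain ⟨a, b, hab, rfl⟩ := Finset.card_eq_two.mp he
    by_cases ha : a ∈ U <;> by_cases hb : b ∈ U
    · simp [Finset.insert_inter_of_mem, ha, hb, hab, Nat.odd_iff] at hodd
    · exact ⟨a, ha, b, hb, rfl⟩
    · exact ⟨b, hb, a, ha, Finset.pair_comm b a⟩
    · simp [Finset.insert_inter_of_notMem, ha, hb] at hodd
  · rintro ⟨u, hu, v, hv, rfl⟩
    have huv : u ≠ v := fun h => hv (h ▸ hu)
    simp [Finset.card_pair huv, Finset.insert_inter_of_mem hu, Finset.singleton_inter_of_notMem hv]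

theorem sum_cobV {V M : Type*} [Fintype V] [DecidableEq V] [AddCommMonoid M]
    (U : Finset V) (f : Finset V → M) :
    ∑ e ∈ cobV U, f e = ∑ u ∈ U, ∑ v ∈ Uᶜ, f {u, v} := by
  have himage : cobV U = (U ×ˢ Uᶜ).image fun x => {x.1, x.2} := by
    ext e
    simp only [mem_cobV_iff, Finset.mem_image, Finset.mem_product, Prod.exists]
    grind
  rw [himage, Finset.sum_image, Finset.sum_product]
  rintro ⟨a, b⟩ hab ⟨c, d⟩ hcd h
  simp only [Finset.coe_product, Set.mem_prod, Finset.mem_coe, Finset.mem_compl] at hab hcd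
  have h : ({a, b} : Finset V) = {c, d} := h
  have ha : a ∈ ({c, d} : Finset V) := h ▸ Finset.mem_insert_self a {b}
  have hb : b ∈ ({c, d} : Finset V) := h ▸ by simp
  grind

theorem sum_cobV_sum {V : Type*} [Fintype V] [DecidableEq V] (U : Finset V) (p : V → ℝ) :
    ∑ e ∈ cobV U, ∑ v ∈ e, p v =
      (Uᶜ.card : ℝ) * ∑ v ∈ U, p v + (U.card : ℝ) * ∑ v ∈ Uᶜ, p v := by
  rw [sum_cobV]
  have hpair : ∀ u ∈ U, ∑ v ∈ Uᶜ, ∑ w ∈ {u, v}, p w = Uᶜ.card * p u + ∑ v ∈ Uᶜ, p v := by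
    intro u hu
    rw [← nsmul_eq_mul, ← Finset.sum_const, ← Finset.sum_add_distrib]
    refine Finset.sum_congr rfl fun v hv => Finset.sum_pair ?_
    rintro rfl
    exact Finset.mem_compl.mp hv hu
  rw [Finset.sum_congr rfl hpair, Finset.sum_add_distrib, ← Finset.mul_sum, Finset.sum_const,
    nsmul_eq_mul]

theorem sum_lt_sum_cobV_of_le_compl {V : Type*} [Fintype V] [DecidableEq V]
    (n : ℕ) (hn : Fintype.card V = n) (hn2 : 2 ≤ n)
    (p : V → ℝ) (hp0 : ∀ v, 0 ≤ p v) (hp1 : ∑ v, p v = 1)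
    (U : Finset V) (hU : U.Nonempty) (hle : ∑ v ∈ U, p v ≤ ∑ v ∈ Uᶜ, p v) :
    ∑ v ∈ U, p v < ∑ e ∈ cobV U, (∑ v ∈ e, p v) / (n - 1 : ℝ) := by
  have hn' : (2 : ℝ) ≤ n := by exact_mod_cast hn2
  have hcard : (U.card : ℝ) + Uᶜ.card = n := by
    exact_mod_cast (Finset.card_add_card_compl U).trans hn
  have hk : (1 : ℝ) ≤ U.card := by exact_mod_cast hU.card_pos
  have hsum := (Finset.sum_add_sum_compl U p).trans hp1
  have hnonneg : 0 ≤ ∑ v ∈ U, p v := Finset.sum_nonneg fun v _ => hp0 v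
  rw [← Finset.sum_div, sum_cobV_sum, lt_div_iff₀ (by linarith)]
  have hmul := mul_nonneg (sub_nonneg.mpr hk) (sub_nonneg.mpr hle)
  rw [← hcard]
  nlinarith

theorem stmt_5 {V : Type*} [Fintype V] [DecidableEq V]
    (n : ℕ) (hn : Fintype.card V = n) (hn2 : 2 ≤ n)
    (p : V → ℝ) (hp0 : ∀ v, 0 ≤ p v) (hp1 : ∑ v, p v = 1)
    (U : Finset V) (hUne : U ≠ ∅) (hUV : U ≠ Finset.univ) :
    ∃ U₀ : Finset V, cobV U₀ = cobV U ∧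
      ∑ v ∈ U₀, p v < ∑ e ∈ cobV U, (∑ v ∈ e, p v) / (n - 1 : ℝ) := by
  rcases le_total (∑ v ∈ U, p v) (∑ v ∈ Uᶜ, p v) with hle | hle
  · exact ⟨U, rfl, sum_lt_sum_cobV_of_le_compl n hn hn2 p hp0 hp1 U
      (Finset.nonempty_iff_ne_empty.mpr hUne) hle⟩
  · refine ⟨Uᶜ, cobV_compl U, ?_⟩
    rw [← cobV_compl U]
    refine sum_lt_sum_cobV_of_le_compl n hn hn2 p hp0 hp1 Uᶜ ?_ (by rwa [compl_compl])
    rwa [Finset.nonempty_iff_ne_empty, Ne, Finset.compl_eq_empty_iff]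
end

section
/- Let V be a finite set with |V| = n ≥ 3, let p be a probability distribution on V, and let F be a set of edges (2-element subsets of V). Then there is a set of edges F₀ such that δF₀ = δF and 2n·p(F₀) ≤ 3(n−2)·p(δF); in particular p(F₀) ≤ (3/2)·p(δF). -/
open Finset

section ConeEdges

variable {V : Type*} [Fintype V] [DecidableEq V]

/-- The link at `v` of the coboundary of `F`: the edges avoiding `v` whose cone with apex `v`
lies in the coboundary of `F`. -/
def coneEdges (F : Finset (Finset V)) (v : V) : Finset (Finset V) :=
  (edgesOn V).filter (fun e => v ∉ e ∧ insert v e ∈ cobE F)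

theorem coneEdges_subset (F : Finset (Finset V)) (v : V) : coneEdges F v ⊆ edgesOn V :=
  filter_subset _ _

theorem filter_subset_triple {G : Finset (Finset V)} (hG : G ⊆ edgesOn V) {a b c : V}
    (hab : a ≠ b) (hac : a ≠ c) (hbc : b ≠ c) :
    G.filter (· ⊆ {a, b, c}) =
      ({{a, b}, {a, c}, {b, c}} : Finset (Finset V)).filter (· ∈ G) := by
  ext e
  simp only [mem_filter, mem_insert, mem_singleton]
  constructor
  · rintro ⟨he, hsub⟩
    refine ⟨?_, he⟩
    obtain ⟨x, y, hxy, rfl⟩ := card_eq_two.1 (mem_powersetCard.1 (hG he)).2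
    have hx : x ∈ ({a, b, c} : Finset V) := hsub (by simp)
    have hy : y ∈ ({a, b, c} : Finset V) := hsub (by simp)
    simp only [mem_insert, mem_singleton] at hx hy
    rcases hx with rfl | rfl | rfl <;> rcases hy with rfl | rfl | rfl <;>
      simp_all [pair_comm]
  · rintro ⟨rfl | rfl | rfl, he⟩ <;> refine ⟨he, ?_⟩ <;> intro x <;> simp <;> tauto

/-- Membership of a triangle in the coboundary, as the parity of its three edges. -/
theorem triple_mem_cobE {G : Finset (Finset V)} (hG : G ⊆ edgesOn V) {a b c : V}
    (hab : a ≠ b) (hac : a ≠ c) (hbc : b ≠ c) :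
    {a, b, c} ∈ cobE G ↔ (({a, b} ∈ G) ↔ (({a, c} ∈ G) ↔ ({b, c} ∈ G))) := by
  have h1 : ({a, b} : Finset V) ≠ {a, c} := fun h => by
    have : b ∈ ({a, c} : Finset V) := h ▸ by simp
    simp_all
  have h2 : ({a, b} : Finset V) ≠ {b, c} := fun h => by
    have : a ∈ ({b, c} : Finset V) := h ▸ by simp
    simp_all
  have h3 : ({a, c} : Finset V) ≠ {b, c} := fun h => by
    have : a ∈ ({b, c} : Finset V) := h ▸ by simp
    simp_all
  have ht : ({a, b, c} : Finset V) ∈ trianglesOn V :=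
    mem_powersetCard.2 ⟨subset_univ _, card_eq_three.2 ⟨a, b, c, hab, hac, hbc, rfl⟩⟩
  rw [cobE, mem_filter, filter_subset_triple hG hab hac hbc]
  simp only [ht, true_and, filter_insert, filter_singleton]
  by_cases hA : ({a, b} : Finset V) ∈ G <;> by_cases hB : ({a, c} : Finset V) ∈ G <;>
    by_cases hC : ({b, c} : Finset V) ∈ G <;> (simp [hA, hB, hC, h1, h2, h3]; try decide)

theorem pair_mem_coneEdges {F : Finset (Finset V)} {v a b : V} (hab : a ≠ b) :
    {a, b} ∈ coneEdges F v ↔ v ≠ a ∧ v ≠ b ∧ {v, a, b} ∈ cobE F := by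
  have : ({a, b} : Finset V) ∈ edgesOn V :=
    mem_powersetCard.2 ⟨subset_univ _, card_pair hab⟩
  simp [coneEdges, this, and_assoc]

/-- Coning off the coboundary from any vertex gives a set of edges with the same coboundary. -/
theorem cobE_coneEdges {F : Finset (Finset V)} (hF : F ⊆ edgesOn V) (v : V) :
    cobE (coneEdges F v) = cobE F := by
  ext t
  by_cases ht : t ∈ trianglesOn V
  swap
  · simp [cobE, ht]
  have hcard := (mem_powersetCard.1 ht).2
  by_cases hv : v ∈ t
  · have h2 : (t.erase v).card = 2 := by rw [card_erase_of_mem hv, hcard]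
    obtain ⟨b, c, hbc, he⟩ := card_eq_two.1 h2
    have hvb : v ≠ b := fun h => notMem_erase v t (by rw [he, h]; simp)
    have hvc : v ≠ c := fun h => notMem_erase v t (by rw [he, h]; simp)
    obtain rfl : t = {v, b, c} := by rw [← insert_erase hv, he]
    rw [triple_mem_cobE (coneEdges_subset F v) hvb hvc hbc, pair_mem_coneEdges hvb,
      pair_mem_coneEdges hvc, pair_mem_coneEdges hbc]
    simp [hvb, hvc]
  · obtain ⟨a, b, c, hab, hac, hbc, rfl⟩ := card_eq_three.1 hcard
    simp only [mem_insert, mem_singleton, not_or] at hv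
    obtain ⟨hva, hvb, hvc⟩ := hv
    rw [triple_mem_cobE (coneEdges_subset F v) hab hac hbc, pair_mem_coneEdges hab,
      pair_mem_coneEdges hac, pair_mem_coneEdges hbc, triple_mem_cobE hF hva hvb hab,
      triple_mem_cobE hF hva hvc hac, triple_mem_cobE hF hvb hvc hbc,
      triple_mem_cobE hF hab hac hbc]
    simp only [ne_eq, hva, hvb, hvc, not_false_eq_true, true_and]
    by_cases hA : ({v, a} : Finset V) ∈ F <;> by_cases hB : ({v, b} : Finset V) ∈ F <;>
      by_cases hC : ({v, c} : Finset V) ∈ F <;> by_cases hD : ({a, b} : Finset V) ∈ F <;>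
      by_cases hE : ({a, c} : Finset V) ∈ F <;> simp [hA, hB, hC, hD, hE]

theorem sum_coneEdges (p : V → ℝ) (F : Finset (Finset V)) (v : V) :
    ∑ e ∈ coneEdges F v, ∑ u ∈ e, p u =
      ∑ t ∈ (cobE F).filter (v ∈ ·), (∑ u ∈ t, p u - p v) := by
  refine sum_nbij' (insert v) (fun t => t.erase v) ?_ ?_ ?_ ?_ ?_
  · intro e he
    simp_all [coneEdges]
  · intro t ht
    obtain ⟨ht, hv⟩ := mem_filter.1 ht
    have h3 := (mem_powersetCard.1 (mem_filter.1 ht).1).2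
    refine mem_filter.2 ⟨mem_powersetCard.2 ⟨subset_univ _, ?_⟩, notMem_erase v t, ?_⟩
    · rw [card_erase_of_mem hv, h3]
    · rwa [insert_erase hv]
  · intro e he
    exact erase_insert (mem_filter.1 he).2.1
  · intro t ht
    exact insert_erase (mem_filter.1 ht).2
  · intro e he
    rw [sum_insert (mem_filter.1 he).2.1]
    ring

theorem sum_sum_coneEdges (p : V → ℝ) (F : Finset (Finset V)) :
    ∑ v, ∑ e ∈ coneEdges F v, ∑ u ∈ e, p u = 2 * ∑ t ∈ cobE F, ∑ u ∈ t, p u := by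
  simp_rw [sum_coneEdges, sum_filter]
  rw [sum_comm, mul_sum]
  refine sum_congr rfl fun t ht => ?_
  have h3 := (mem_powersetCard.1 (mem_filter.1 ht).1).2
  rw [← sum_filter, filter_mem_eq_inter, univ_inter, sum_sub_distrib, sum_const, h3]
  simp
  ring

theorem exists_sum_coneEdges_le [Nonempty V] (p : V → ℝ) (F : Finset (Finset V)) :
    ∃ v, Fintype.card V * ∑ e ∈ coneEdges F v, ∑ u ∈ e, p u ≤
      2 * ∑ t ∈ cobE F, ∑ u ∈ t, p u := by
  obtain ⟨v, -, hv⟩ := exists_min_image univ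
    (fun v => ∑ e ∈ coneEdges F v, ∑ u ∈ e, p u) univ_nonempty
  refine ⟨v, ?_⟩
  rw [← sum_sum_coneEdges, ← nsmul_eq_mul]
  exact card_nsmul_le_sum univ _ _ hv

end ConeEdges

theorem stmt_6 {V : Type*} [Fintype V] [DecidableEq V]
    (n : ℕ) (hn : Fintype.card V = n) (hn3 : 3 ≤ n)
    (p : V → ℝ) (hp0 : ∀ v, 0 ≤ p v) (hp1 : ∑ v, p v = 1)
    (F : Finset (Finset V)) (hF : F ⊆ edgesOn V) :
    ∃ F₀ : Finset (Finset V), F₀ ⊆ edgesOn V ∧ cobE F₀ = cobE F ∧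
      2 * n * ∑ e ∈ F₀, (∑ v ∈ e, p v) / (n - 1 : ℝ) ≤
        3 * (n - 2) * ∑ t ∈ cobE F, (∑ v ∈ t, p v) / ((n - 1).choose 2 : ℝ) ∧
      ∑ e ∈ F₀, (∑ v ∈ e, p v) / (n - 1 : ℝ) ≤
        (3 / 2 : ℝ) * ∑ t ∈ cobE F, (∑ v ∈ t, p v) / ((n - 1).choose 2 : ℝ) := by
  subst hn
  have : Nonempty V := Fintype.card_pos_iff.1 (by omega)
  obtain ⟨v, hv⟩ := exists_sum_coneEdges_le p F
  refine ⟨coneEdges F v, coneEdges_subset F v, cobE_coneEdges hF v, ?_⟩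
  have hT : 0 ≤ ∑ t ∈ cobE F, ∑ u ∈ t, p u :=
    sum_nonneg fun t _ => sum_nonneg fun u _ => hp0 u
  obtain ⟨m, hm⟩ : ∃ m, Fintype.card V = m + 3 := ⟨_, (Nat.sub_add_cancel hn3).symm⟩
  have hchoose : (((m + 3 - 1).choose 2 : ℕ) : ℝ) = (m + 2) * (m + 1) / 2 := by
    rw [Nat.cast_choose_two]
    push_cast [Nat.add_sub_cancel, show m + 3 - 1 = m + 2 from rfl]
    ring
  rw [← sum_div, ← sum_div]
  rw [hm] at hv ⊢
  rw [hchoose]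
  push_cast at hv ⊢
  generalize ∑ e ∈ coneEdges F v, ∑ u ∈ e, p u = S at hv ⊢
  generalize ∑ t ∈ cobE F, ∑ u ∈ t, p u = T at hv hT ⊢
  have hm0 : (0 : ℝ) ≤ m := m.cast_nonneg
  have key : 2 * (m + 3 : ℝ) * (S / (m + 3 - 1)) ≤
      3 * (m + 3 - 2) * (T / ((m + 2) * (m + 1) / 2)) := by
    have e1 : 2 * (m + 3 : ℝ) * (S / (m + 3 - 1)) = 2 * ((m + 3) * S) / (m + 2) := by
      rw [show (m + 3 - 1 : ℝ) = m + 2 by ring]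
      ring
    have e2 : 3 * (m + 3 - 2 : ℝ) * (T / ((m + 2) * (m + 1) / 2)) = 6 * T / (m + 2) := by
      field_simp
      ring
    rw [e1, e2]
    exact div_le_div_of_nonneg_right (by linarith) (by positivity)
  refine ⟨key, ?_⟩
  have hR : 0 ≤ T / ((m + 2 : ℝ) * (m + 1) / 2) := by positivity
  refine le_of_mul_le_mul_left (key.trans ?_) (show (0 : ℝ) < 2 * (m + 3) by positivity)
  nlinarith
end

section
/- (Boros–Füredi) Let x₁,…,xₙ be n points in ℝ² in general position. Then there exists a point r ∈ ℝ² that belongs to the closed triangles (convex hulls) spanned by at least (2/9)·binom(n,3) of the binom(n,3) three-element subsets of the points. -/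
/-- A family of points in the plane is in general position if the points are
pairwise distinct and no three of them are collinear. -/
def InGeneralPosition {ι : Type*} (x : ι → EuclideanSpace ℝ (Fin 2)) : Prop :=
  Function.Injective x ∧
    ∀ i j k : ι, i ≠ j → i ≠ k → j ≠ k →
      ¬ Collinear ℝ ({x i, x j, x k} : Set (EuclideanSpace ℝ (Fin 2)))

local notation "Plane" => EuclideanSpace ℝ (Fin 2)

/-- The indicator in `ZMod 2` of the event that the segment `[u, w]` crosses the positive
first coordinate axis, with the convention that points on the axis lie below it. -/
noncomputable def axisCrossing (u w : Plane) : ZMod 2 :=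
  if (0 < u 1 ∧ w 1 ≤ 0 ∧ 0 < w 0 * u 1 - u 0 * w 1) ∨
      (u 1 ≤ 0 ∧ 0 < w 1 ∧ 0 < u 0 * w 1 - w 0 * u 1) then 1 else 0

lemma axisCrossing_self (u : Plane) : axisCrossing u u = 0 := by
  rw [axisCrossing, if_neg]
  rintro (⟨h, h', -⟩ | ⟨h, h', -⟩) <;> linarith

lemma axisCrossing_comm (u w : Plane) : axisCrossing u w = axisCrossing w u := by
  unfold axisCrossing
  congr 1
  apply propext
  tauto

lemma mem_convexHull_triple {u v w p : Plane} {a b c : ℝ} (ha : 0 ≤ a) (hb : 0 ≤ b) (hc : 0 ≤ c)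
    (hpos : 0 < a + b + c) (h : a • u + b • v + c • w = (a + b + c) • p) :
    p ∈ convexHull ℝ {u, v, w} := by
  have hs := convex_convexHull ℝ ({u, v, w} : Set Plane)
  have hu : u ∈ convexHull ℝ {u, v, w} := subset_convexHull _ _ (by simp)
  have hv : v ∈ convexHull ℝ {u, v, w} := subset_convexHull _ _ (by simp)
  have hw : w ∈ convexHull ℝ {u, v, w} := subset_convexHull _ _ (by simp)
  have key := hs.sum_mem (t := Finset.univ) (w := ![a / (a+b+c), b / (a+b+c), c / (a+b+c)])
    (z := ![u, v, w]) (by intro i _; fin_cases i <;> simp <;> positivity)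
    (by simp [Fin.sum_univ_three]; field_simp)
    (by intro i _; fin_cases i <;> simpa)
  convert key using 1
  simp only [Fin.sum_univ_three, Matrix.cons_val]
  have : p = (a+b+c)⁻¹ • (a • u + b • v + c • w) := by
    rw [h, smul_smul, inv_mul_cancel₀ hpos.ne', one_smul]
  rw [this]
  simp only [smul_add, smul_smul, div_eq_inv_mul]

/-- If the cross products of consecutive vertices all have the sign of `σ`, then the triangle
contains the origin. -/
lemma zero_mem_convexHull_of_cross {u v w : Plane} (σ : ℝ)
    (hvw : 0 ≤ σ * (v 0 * w 1 - v 1 * w 0)) (hwu : 0 ≤ σ * (w 0 * u 1 - w 1 * u 0))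
    (huv : 0 < σ * (u 0 * v 1 - u 1 * v 0)) : (0 : Plane) ∈ convexHull ℝ {u, v, w} := by
  refine mem_convexHull_triple hvw hwu huv.le (by linarith) ?_
  ext i
  fin_cases i <;> simp <;> ring

lemma axisCrossing_eq_zero {u w : Plane} (h : 0 < u 1 ↔ 0 < w 1) : axisCrossing u w = 0 := by
  rw [axisCrossing, if_neg]
  rintro (⟨h₁, h₂, -⟩ | ⟨h₁, h₂, -⟩)
  · exact h₂.not_gt (h.1 h₁)
  · exact h₁.not_gt (h.2 h₂)

lemma zero_mem_convexHull_of_crossing {u v w : Plane} (hw : 0 < u 1 ↔ ¬ 0 < w 1)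
    (huv : axisCrossing u v = 1) (huw : axisCrossing u w = 0) :
    (0 : Plane) ∈ convexHull ℝ {u, v, w} := by
  simp only [axisCrossing, ite_eq_left_iff, zero_ne_one, ite_eq_right_iff, one_ne_zero,
    imp_false, not_not] at huv huw
  have key : (v 0 * w 1 - v 1 * w 0) * u 1 =
      - (w 0 * u 1 - w 1 * u 0) * v 1 - (u 0 * v 1 - u 1 * v 0) * w 1 := by ring
  rcases huv with ⟨h₁, h₂, h₃⟩ | ⟨h₁, h₂, h₃⟩
  · have hw' : w 1 ≤ 0 := not_lt.1 (hw.1 h₁)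
    have h₄ : w 0 * u 1 - u 0 * w 1 ≤ 0 := by
      by_contra h
      exact huw (Or.inl ⟨h₁, hw', not_le.1 h⟩)
    refine zero_mem_convexHull_of_cross (-1) ?_ (by linarith) (by linarith)
    by_contra h
    have : 0 < (v 0 * w 1 - v 1 * w 0) * u 1 := mul_pos (by linarith) h₁
    nlinarith
  · have hw' : 0 < w 1 := by
      by_contra h
      exact h₁.not_gt (hw.2 h)
    have h₄ : u 0 * w 1 - w 0 * u 1 ≤ 0 := by
      by_contra h
      exact huw (Or.inr ⟨h₁, hw', not_le.1 h⟩)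
    refine zero_mem_convexHull_of_cross 1 ?_ (by linarith) (by linarith)
    by_contra h
    have : 0 ≤ (v 0 * w 1 - v 1 * w 0) * u 1 := mul_nonneg_of_nonpos_of_nonpos (by linarith) h₁
    nlinarith [mul_pos (show 0 < u 0 * v 1 - u 1 * v 0 by linarith) hw']

lemma zero_mem_convexHull_of_crossing_ne {u v w : Plane} (hv : 0 < u 1 ↔ ¬ 0 < v 1)
    (hw : 0 < u 1 ↔ ¬ 0 < w 1) (h : axisCrossing u v ≠ axisCrossing u w) :
    (0 : Plane) ∈ convexHull ℝ {u, v, w} := by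
  have two : ∀ z : ZMod 2, z = 0 ∨ z = 1 := by decide
  rcases two (axisCrossing u v) with h₁ | h₁ <;> rcases two (axisCrossing u w) with h₂ | h₂
  · exact absurd (h₁.trans h₂.symm) h
  · rw [Set.pair_comm v w]
    exact zero_mem_convexHull_of_crossing hv h₂ h₁
  · exact zero_mem_convexHull_of_crossing hw h₁ h₂
  · exact absurd (h₁.trans h₂.symm) h

/-- A closed triangle whose boundary crosses the positive axis an odd number of times
contains the origin. -/
lemma zero_mem_convexHull_of_odd_crossing {u v w : Plane}
    (h : axisCrossing u v + axisCrossing v w + axisCrossing u w ≠ 0) :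
    (0 : Plane) ∈ convexHull ℝ {u, v, w} := by
  have add_ne : ∀ a b : ZMod 2, a + b ≠ 0 → a ≠ b := by decide
  by_cases hvw : 0 < v 1 ↔ 0 < w 1 <;> by_cases huv : 0 < u 1 ↔ 0 < v 1
  · simp [axisCrossing_eq_zero hvw, axisCrossing_eq_zero huv,
      axisCrossing_eq_zero (huv.trans hvw)] at h
  · rw [axisCrossing_eq_zero hvw, add_zero] at h
    exact zero_mem_convexHull_of_crossing_ne (by grind) (by grind) (add_ne _ _ h)
  · rw [axisCrossing_eq_zero huv, zero_add, axisCrossing_comm v w, axisCrossing_comm u w,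
      add_comm] at h
    rw [Set.pair_comm v w, Set.insert_comm]
    exact zero_mem_convexHull_of_crossing_ne (by grind) (by grind) (add_ne _ _ h)
  · rw [axisCrossing_eq_zero (u := u) (w := w) (by grind), add_zero, axisCrossing_comm u v] at h
    rw [Set.insert_comm]
    exact zero_mem_convexHull_of_crossing_ne (by grind) (by grind) (add_ne _ _ h)

/-- Ray casting: if the horizontal ray from `p` crosses the boundary of a triangle an odd number
of times, then the triangle contains `p`. -/
lemma mem_convexHull_of_odd_crossing {p a b c : Plane}
    (h : axisCrossing (a - p) (b - p) + axisCrossing (b - p) (c - p) +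
      axisCrossing (a - p) (c - p) ≠ 0) : p ∈ convexHull ℝ {a, b, c} := by
  have h0 := zero_mem_convexHull_of_odd_crossing h
  have : ({a - p, b - p, c - p} : Set Plane) = (AffineEquiv.vaddConst ℝ p).symm '' {a, b, c} := by
    simp [Set.image_insert_eq]
  have e : ((AffineEquiv.vaddConst ℝ p).symm : Plane → Plane) =
    ((AffineEquiv.vaddConst ℝ p).symm : Plane →ᵃ[ℝ] Plane) := rfl
  rw [this, e, ← AffineMap.image_convexHull] at h0
  obtain ⟨q, hq, hqp⟩ := h0
  rw [← e] at hqp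
  have : q = p := by simpa [sub_eq_zero] using hqp
  exact this ▸ hq

/-- Ray casting with the ray from `x` in the opposite direction. -/
lemma mem_convexHull_of_odd_crossing' {x a b c : Plane}
    (h : axisCrossing (x - a) (x - b) + axisCrossing (x - b) (x - c) +
      axisCrossing (x - a) (x - c) ≠ 0) : x ∈ convexHull ℝ {a, b, c} := by
  have h0 := zero_mem_convexHull_of_odd_crossing h
  have : ({x - a, x - b, x - c} : Set Plane) = (AffineEquiv.constVSub ℝ x) '' {a, b, c} := by
    simp [Set.image_insert_eq]
  have e : ((AffineEquiv.constVSub ℝ x) : Plane → Plane) =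
    ((AffineEquiv.constVSub ℝ x) : Plane →ᵃ[ℝ] Plane) := rfl
  rw [this, e, ← AffineMap.image_convexHull] at h0
  obtain ⟨q, hq, hqp⟩ := h0
  rw [← e] at hqp
  have : x = q := by simpa [sub_eq_zero] using hqp
  exact this ▸ hq

open scoped Pointwise in
/-- Odd crossing number of the parallelogram of differences forces two segments to meet. -/
lemma exists_mem_segment_of_odd_crossing {a b r s : Plane}
    (h : axisCrossing (a - r) (b - r) + axisCrossing (a - s) (b - s) +
      (axisCrossing (a - r) (a - s) + axisCrossing (b - r) (b - s)) ≠ 0) :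
    ∃ q ∈ segment ℝ a b, q ∈ segment ℝ r s := by
  have hconv : Convex ℝ (segment ℝ a b - segment ℝ r s) :=
    (convex_segment a b).sub (convex_segment r s)
  have h0 : (0 : Plane) ∈ segment ℝ a b - segment ℝ r s := by
    have har : a - r ∈ segment ℝ a b - segment ℝ r s :=
      Set.sub_mem_sub (left_mem_segment ..) (left_mem_segment ..)
    have hbr : b - r ∈ segment ℝ a b - segment ℝ r s :=
      Set.sub_mem_sub (right_mem_segment ..) (left_mem_segment ..)
    have has : a - s ∈ segment ℝ a b - segment ℝ r s :=
      Set.sub_mem_sub (left_mem_segment ..) (right_mem_segment ..)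
    have hbs : b - s ∈ segment ℝ a b - segment ℝ r s :=
      Set.sub_mem_sub (right_mem_segment ..) (right_mem_segment ..)
    have split : ∀ t₁ t₂ t₃ t₄ t₅ : ZMod 2, t₁ + t₂ + (t₃ + t₄) ≠ 0 →
        t₁ + t₄ + t₅ ≠ 0 ∨ t₃ + t₂ + t₅ ≠ 0 := by decide
    rcases split _ _ _ _ (axisCrossing (a - r) (b - s)) h with h | h
    · exact convexHull_min (by rintro _ (rfl | rfl | rfl) <;> assumption) hconv
        (zero_mem_convexHull_of_odd_crossing h)
    · exact convexHull_min (by rintro _ (rfl | rfl | rfl) <;> assumption) hconv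
        (zero_mem_convexHull_of_odd_crossing h)
  obtain ⟨q, hq, q', hq', e⟩ := Set.mem_sub.1 h0
  rw [sub_eq_zero] at e
  exact ⟨q, hq, e ▸ hq'⟩

/-- The value `κ` is taken by the colouring `c` on more than two thirds of the points. -/
def IsMajority {ι : Type*} [Fintype ι] (c : ι → ZMod 2) (κ : ZMod 2) : Prop :=
  3 * (Finset.univ.filter fun a => c a ≠ κ).card < Fintype.card ι

section Majority

variable {ι : Type*} [Fintype ι] [DecidableEq ι]

lemma exists_isMajority {c : ι → ZMod 2} {P Q : Finset (ι × ι)}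
    (hP : 9 * P.card < 2 * Fintype.card ι ^ 2) (hQ : 9 * Q.card < 2 * Fintype.card ι ^ 2)
    (h : ∀ a b, c a ≠ c b → (a, b) ∈ P ∨ (a, b) ∈ Q) : ∃ κ, IsMajority c κ := by
  set S := Finset.univ.filter fun a => c a ≠ 0 with hS
  have hsub : S ×ˢ Sᶜ ∪ Sᶜ ×ˢ S ⊆ P ∪ Q := by
    rintro ⟨a, b⟩ hab
    rw [Finset.mem_union]
    apply h
    intro e
    simp [hS, e] at hab
  have hdisj : Disjoint (S ×ˢ Sᶜ) (Sᶜ ×ˢ S) :=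
    Finset.disjoint_product.2 (Or.inl disjoint_compl_right)
  have hcard := (Finset.card_le_card hsub).trans (Finset.card_union_le P Q)
  rw [Finset.card_union_of_disjoint hdisj, Finset.card_product, Finset.card_product] at hcard
  have hcompl : S.card + Sᶜ.card = Fintype.card ι := Finset.card_add_card_compl S
  have key : 3 * S.card < Fintype.card ι ∨ 3 * Sᶜ.card < Fintype.card ι := by
    by_contra! hc
    rw [← hcompl] at hP hQ hc
    obtain ⟨h₁, h₂⟩ := hc
    have : Sᶜ.card ≤ 2 * S.card := by omega
    have : S.card ≤ 2 * Sᶜ.card := by omega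
    zify at *
    nlinarith [mul_nonneg (show (0 : ℤ) ≤ 2 * S.card - Sᶜ.card by linarith)
      (show (0 : ℤ) ≤ 2 * Sᶜ.card - S.card by linarith)]
  rcases key with h | h
  · exact ⟨0, h⟩
  · refine ⟨1, ?_⟩
    have : (Finset.univ.filter fun a => c a ≠ 1) = Sᶜ := by
      have two : ∀ z : ZMod 2, z ≠ 1 ↔ z = 0 := by decide
      ext a
      simp [hS, two]
    rwa [IsMajority, this]

/-- Three colourings with zero sum have majority values with zero sum. -/
lemma IsMajority.add_eq_zero_of_add_eq_zero {c₁ c₂ c₃ : ι → ZMod 2} {κ₁ κ₂ κ₃ : ZMod 2}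
    (h₁ : IsMajority c₁ κ₁) (h₂ : IsMajority c₂ κ₂) (h₃ : IsMajority c₃ κ₃)
    (h : ∀ a, c₁ a + c₂ a + c₃ a = 0) : κ₁ + κ₂ + κ₃ = 0 := by
  by_contra hκ
  have hcover : (Finset.univ : Finset ι) ⊆ (Finset.univ.filter fun a => c₁ a ≠ κ₁) ∪
      (Finset.univ.filter fun a => c₂ a ≠ κ₂) ∪ (Finset.univ.filter fun a => c₃ a ≠ κ₃) := by
    intro a _
    by_contra ha
    simp only [Finset.mem_union, Finset.mem_filter, Finset.mem_univ, true_and, not_or,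
      not_not] at ha
    obtain ⟨⟨rfl, rfl⟩, rfl⟩ := ha
    exact hκ (h a)
  have := (Finset.card_le_card hcover).trans ((Finset.card_union_le _ _).trans
    (Nat.add_le_add_right (Finset.card_union_le _ _) _))
  rw [Finset.card_univ] at this
  unfold IsMajority at h₁ h₂ h₃
  omega

/-- Colourings which agree outside a small set have the same majority value. -/
lemma IsMajority.congr_of_card_lt {c c' : ι → ZMod 2} {κ κ' : ZMod 2} {K : Finset ι}
    (h : IsMajority c κ) (h' : IsMajority c' κ') (hK : ∀ a ∉ K, c a = c' a)
    (hcard : 3 * K.card < Fintype.card ι) : κ = κ' := by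
  by_contra hκ
  have hcover : (Finset.univ : Finset ι) ⊆ (Finset.univ.filter fun a => c a ≠ κ) ∪
      (Finset.univ.filter fun a => c' a ≠ κ') ∪ K := by
    intro a _
    by_contra ha
    simp only [Finset.mem_union, Finset.mem_filter, Finset.mem_univ, true_and, not_or,
      not_not] at ha
    obtain ⟨⟨rfl, rfl⟩, ha⟩ := ha
    exact hκ (hK a ha)
  have := (Finset.card_le_card hcover).trans ((Finset.card_union_le _ _).trans
    (Nat.add_le_add_right (Finset.card_union_le _ _) _))
  rw [Finset.card_univ] at this
  unfold IsMajority at h h'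
  omega

end Majority

section Cuts

variable {n : ℕ} (x : Fin n → Plane)

open Classical in
/-- The pairs of points which, together with the `v`-th one, span a triangle that meets the
closed ball of radius `ε` about `r`. -/
noncomputable def nearPairs (ε : ℝ) (r : Plane) (v : Fin n) : Finset (Fin n × Fin n) :=
  Finset.univ.filter fun p => ∃ q ∈ convexHull ℝ {x v, x p.1, x p.2}, dist q r ≤ ε

variable {x}

lemma mem_nearPairs {ε : ℝ} {r q : Plane} {v a b : Fin n}
    (hq : q ∈ convexHull ℝ {x v, x a, x b}) (h : dist q r ≤ ε) :
    (a, b) ∈ nearPairs x ε r v := by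
  simp only [nearPairs, Finset.mem_filter, Finset.mem_univ, true_and]
  exact ⟨q, hq, h⟩

variable (x)

/-- The side of the `a`-th point with respect to the closed curve formed by the ray from `r`
away from the `v`-th point, the segment `[r, s]`, and the ray from `s` away from the `w`-th
point. -/
noncomputable def side (r s : Plane) (v w a : Fin n) : ZMod 2 :=
  axisCrossing (x a - r) (x v - r) + axisCrossing (x a - s) (x w - s) +
    axisCrossing (x a - r) (x a - s)

variable {x}

lemma mem_nearPairs_of_side_ne {ε : ℝ} {r s : Plane} {v w a b : Fin n} (hε : 0 ≤ ε)
    (hrs : dist s r ≤ ε) (h : side x r s v w a ≠ side x r s v w b) :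
    (a, b) ∈ nearPairs x ε r v ∨ (a, b) ∈ nearPairs x ε s w := by
  have split : ∀ a₁ a₂ a₃ b₁ b₂ b₃ t₁ t₂ : ZMod 2, a₁ + a₂ + a₃ ≠ b₁ + b₂ + b₃ →
      a₁ + b₁ + t₁ ≠ 0 ∨ a₂ + b₂ + t₂ ≠ 0 ∨ t₁ + t₂ + (a₃ + b₃) ≠ 0 := by decide
  rcases split _ _ _ _ _ _ (axisCrossing (x a - r) (x b - r))
    (axisCrossing (x a - s) (x b - s)) h with h | h | h
  · left
    refine mem_nearPairs (q := r) (mem_convexHull_of_odd_crossing ?_) (by simpa)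
    rwa [axisCrossing_comm (x v - r), axisCrossing_comm (x v - r), add_right_comm]
  · right
    refine mem_nearPairs (q := s) (mem_convexHull_of_odd_crossing ?_) (by simpa)
    rwa [axisCrossing_comm (x w - s), axisCrossing_comm (x w - s), add_right_comm]
  · left
    obtain ⟨q, hab, hq⟩ := exists_mem_segment_of_odd_crossing h
    refine mem_nearPairs (q := q) ?_ ?_
    · rw [← convexHull_pair] at hab
      exact convexHull_mono (Set.subset_insert _ _) hab
    · exact (convex_closedBall r ε).segment_subset (by simpa) (by simpa) hq

lemma side_add_side_add_side (r s t : Plane) (u v w a : Fin n) :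
    side x r s u v a + side x s t v w a + side x r t u w a =
      axisCrossing (x a - r) (x a - s) + axisCrossing (x a - s) (x a - t) +
        axisCrossing (x a - r) (x a - t) := by
  have key : ∀ a b c d e f : ZMod 2, a + b + d + (b + c + e) + (a + c + f) = d + e + f := by
    decide
  exact key ..

/-- The cocycle condition for the majority sides of three nearby curves. -/
lemma majority_add_majority_add_majority {ε : ℝ} {r s t : Plane} {u v w : Fin n} (hε : 0 ≤ ε)
    (hrs : dist s r ≤ ε) (hrt : dist t r ≤ ε)
    (hr : 9 * (nearPairs x ε r u).card < 2 * n ^ 2)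
    (ht : 9 * (nearPairs x ε t w).card < 2 * n ^ 2) {κ₁ κ₂ κ₃ : ZMod 2}
    (h₁ : IsMajority (side x r s u v) κ₁) (h₂ : IsMajority (side x s t v w) κ₂)
    (h₃ : IsMajority (side x r t u w) κ₃) : κ₁ + κ₂ + κ₃ = 0 := by
  set τ : Fin n → ZMod 2 := fun a => axisCrossing (x a - r) (x a - s) +
    axisCrossing (x a - s) (x a - t) + axisCrossing (x a - r) (x a - t) with hτ
  set K := Finset.univ.filter fun a => τ a ≠ 0 with hK
  have hnear : ∀ a b, τ a ≠ 0 ∨ τ b ≠ 0 → (a, b) ∈ nearPairs x ε r u := by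
    have hball : ∀ a, τ a ≠ 0 → dist (x a) r ≤ ε := fun a ha =>
      convexHull_min (s := {r, s, t}) (t := Metric.closedBall r ε)
        (by rintro _ (rfl | rfl | rfl) <;> simpa) (convex_closedBall r ε)
        (mem_convexHull_of_odd_crossing' ha)
    rintro a b (h | h)
    · exact mem_nearPairs (subset_convexHull _ _ (by simp)) (hball a h)
    · exact mem_nearPairs (subset_convexHull _ _ (by simp)) (hball b h)
  have hKcard : 3 * K.card < n := by
    have hsub : K ×ˢ Finset.univ ⊆ nearPairs x ε r u := by
      rintro ⟨a, b⟩ hab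
      simp only [hK, Finset.mem_product, Finset.mem_filter, Finset.mem_univ, true_and,
        and_true] at hab
      exact hnear a b (Or.inl hab)
    have := Finset.card_le_card hsub
    rw [Finset.card_product, Finset.card_univ, Fintype.card_fin] at this
    by_contra! hc
    nlinarith
  obtain ⟨κ, hκ⟩ := exists_isMajority (c := fun a => side x r t u w a + τ a)
    (P := nearPairs x ε r u) (Q := nearPairs x ε t w) (by simpa) (by simpa) (by
      intro a b hab
      by_cases h : τ a ≠ 0 ∨ τ b ≠ 0
      · exact Or.inl (hnear a b h)
      · push Not at h
        rw [h.1, h.2, add_zero, add_zero] at hab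
        exact mem_nearPairs_of_side_ne hε hrt hab)
  have hκ₃ : κ₃ = κ := h₃.congr_of_card_lt (K := K) hκ (by
    intro a ha
    have : τ a = 0 := by simpa [hK] using ha
    simp [this]) (by simpa)
  rw [hκ₃]
  refine h₁.add_eq_zero_of_add_eq_zero h₂ hκ fun a => ?_
  rw [← add_assoc, side_add_side_add_side]
  exact CharTwo.add_self_eq_zero _

end Cuts

section Compactness

variable {n : ℕ} {x : Fin n → Plane}

lemma isClosed_convexHull_triple (a b c : Plane) : IsClosed (convexHull ℝ {a, b, c}) :=
  (Set.toFinite _).isClosed_convexHull ℝ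

lemma nearPairs_mono {ε δ : ℝ} (h : ε ≤ δ) (r : Plane) (v : Fin n) :
    nearPairs x ε r v ⊆ nearPairs x δ r v := by
  intro p hp
  simp only [nearPairs, Finset.mem_filter, Finset.mem_univ, true_and] at hp ⊢
  obtain ⟨q, hq, hd⟩ := hp
  exact ⟨q, hq, hd.trans h⟩

lemma exists_nearPairs_subset (x : Fin n → Plane) (r : Plane) : ∃ ε > 0, ∀ s, dist s r ≤ ε →
    ∀ v, nearPairs x ε s v ⊆ nearPairs x 0 r v := by
  have hloc : ∀ p : Fin n × Fin n × Fin n, ∀ᶠ δ in nhdsWithin (0 : ℝ) (Set.Ioi 0),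
      ∀ q ∈ convexHull ℝ {x p.1, x p.2.1, x p.2.2}, dist q r ≤ 2 * δ →
        r ∈ convexHull ℝ {x p.1, x p.2.1, x p.2.2} := by
    intro p
    by_cases hr : r ∈ convexHull ℝ {x p.1, x p.2.1, x p.2.2}
    · exact Filter.Eventually.of_forall fun _ _ _ _ => hr
    obtain ⟨η, hη, hball⟩ := Metric.isOpen_iff.1
      (isClosed_convexHull_triple (x p.1) (x p.2.1) (x p.2.2)).isOpen_compl r hr
    filter_upwards [Ioo_mem_nhdsGT (half_pos hη)] with δ hδ q hq hd
    exact absurd hq (hball (Metric.mem_ball.2 (by linarith [hδ.2])))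
  obtain ⟨ε, hε, hpos⟩ := ((Filter.eventually_all.2 hloc).and self_mem_nhdsWithin).exists
  refine ⟨ε, hpos, fun s hs v p hp => ?_⟩
  simp only [nearPairs, Finset.mem_filter, Finset.mem_univ, true_and] at hp
  obtain ⟨q, hq, hd⟩ := hp
  refine mem_nearPairs (q := r) (hε (v, p) q hq ?_) (by simp)
  linarith [dist_triangle q s r]

/-- If every point has a vertex with few pairs, this holds with a uniform radius; moreover,
far away there are no pairs at all. -/
lemma exists_uniform_nearPairs (hn : 0 < n)
    (h : ∀ r, ∃ v, 9 * (nearPairs x 0 r v).card < 2 * n ^ 2) (v₀ : Fin n) :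
    ∃ ε > 0, ∃ R > 0, ∃ V : Plane → Fin n,
      (∀ r, 9 * (nearPairs x ε r (V r)).card < 2 * n ^ 2) ∧ (∀ a, ‖x a‖ ≤ R) ∧
      ∀ r, R < ‖r‖ → V r = v₀ ∧ nearPairs x ε r v₀ = ∅ := by
  obtain ⟨R, hR0, hR⟩ : ∃ R > 0, ∀ a, ‖x a‖ ≤ R := by
    refine ⟨∑ a, ‖x a‖ + 1, by positivity, fun a => ?_⟩
    linarith [Finset.single_le_sum (f := fun a => ‖x a‖) (fun _ _ => norm_nonneg _)
      (Finset.mem_univ a)]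
  obtain ⟨ε, hε, hV⟩ : ∃ ε > 0, ∀ r ∈ Metric.closedBall (0 : Plane) (R + 1),
      ∃ v, 9 * (nearPairs x ε r v).card < 2 * n ^ 2 := by
    refine (isCompact_closedBall (0 : Plane) (R + 1)).induction_on
      (p := fun S => ∃ ε > 0, ∀ r ∈ S, ∃ v, 9 * (nearPairs x ε r v).card < 2 * n ^ 2)
      ⟨1, one_pos, by simp⟩ ?_ ?_ ?_
    · rintro S T hST ⟨ε, hε, hT⟩
      exact ⟨ε, hε, fun r hr => hT r (hST hr)⟩
    · rintro S T ⟨ε, hε, hS⟩ ⟨δ, hδ, hT⟩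
      refine ⟨min ε δ, lt_min hε hδ, ?_⟩
      rintro r (hr | hr)
      · obtain ⟨v, hv⟩ := hS r hr
        exact ⟨v, (Nat.mul_le_mul_left 9 (Finset.card_le_card
          (nearPairs_mono (min_le_left ε δ) r v))).trans_lt hv⟩
      · obtain ⟨v, hv⟩ := hT r hr
        exact ⟨v, (Nat.mul_le_mul_left 9 (Finset.card_le_card
          (nearPairs_mono (min_le_right ε δ) r v))).trans_lt hv⟩
    · intro r _
      obtain ⟨ε, hε, hsub⟩ := exists_nearPairs_subset x r
      obtain ⟨v, hv⟩ := h r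
      refine ⟨Metric.closedBall r ε,
        mem_nhdsWithin_of_mem_nhds (Metric.closedBall_mem_nhds r hε), ε, hε, fun s hs => ⟨v, ?_⟩⟩
      exact (Nat.mul_le_mul_left 9 (Finset.card_le_card (hsub s hs v))).trans_lt hv
  have hfar : ∀ r : Plane, R + 1 < ‖r‖ → nearPairs x (min ε 1) r v₀ = ∅ := by
    intro r hr
    rw [Finset.eq_empty_iff_forall_notMem]
    intro p hp
    simp only [nearPairs, Finset.mem_filter, Finset.mem_univ, true_and] at hp
    obtain ⟨q, hq, hd⟩ := hp
    have hqR : q ∈ Metric.closedBall (0 : Plane) R :=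
      convexHull_min (by rintro _ (rfl | rfl | rfl) <;> simpa using hR _)
        (convex_closedBall 0 R) hq
    rw [mem_closedBall_zero_iff] at hqR
    have := norm_sub_norm_le r q
    rw [← dist_eq_norm, dist_comm] at this
    linarith [min_le_right ε 1]
  have : Nonempty (Fin n) := ⟨v₀⟩
  choose! V hV using hV
  refine ⟨min ε 1, lt_min hε one_pos, R + 1, by linarith,
    fun r => if R + 1 < ‖r‖ then v₀ else V r, fun r => ?_, fun a => (hR a).trans (by linarith),
    fun r hr => ⟨if_pos hr, hfar r hr⟩⟩
  by_cases hr : R + 1 < ‖r‖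
  · simp only [if_pos hr, hfar r hr, Finset.card_empty]
    positivity
  · simp only [if_neg hr]
    exact (Nat.mul_le_mul_left 9 (Finset.card_le_card (nearPairs_mono (min_le_left ε 1) r
      _))).trans_lt (hV r (by simpa using hr))

end Compactness

/-- A discrete Stokes formula: a `ZMod 2`-valued cochain on the edges of a square grid which is
closed on every cell has zero sum around the boundary. -/
lemma sum_boundary_eq_zero {h v : ℕ → ℕ → ZMod 2}
    (hv : ∀ i j, h i j + v (i + 1) j + (v i j + h i (j + 1)) = 0) (M N : ℕ) :
    ∑ i ∈ Finset.range M, h i 0 + ∑ j ∈ Finset.range N, v M j +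
      (∑ j ∈ Finset.range N, v 0 j + ∑ i ∈ Finset.range M, h i N) = 0 := by
  have row : ∀ j, ∑ i ∈ Finset.range M, (h i j + h i (j + 1)) = v M j + v 0 j := by
    intro j
    induction M with
    | zero => simp [CharTwo.add_self_eq_zero]
    | succ M ih =>
      have key : ∀ a b c d e : ZMod 2, a + b + (c + d) = 0 → c + e + (a + d) = b + e := by decide
      rw [Finset.sum_range_succ, ih]
      exact key _ _ _ _ _ (hv M j)
  induction N with
  | zero => simp [CharTwo.add_self_eq_zero]
  | succ N ih =>
    have hrow := row N
    rw [Finset.sum_add_distrib] at hrow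
    rw [Finset.sum_range_succ, Finset.sum_range_succ]
    have key : ∀ a b c d e f g : ZMod 2, a + b + (c + d) = 0 → d + g = e + f →
      a + (b + e) + (c + f + g) = 0 := by decide
    exact key _ _ _ _ _ _ _ ih hrow

lemma axisCrossing_eq_zero_of_nonpos {u w : Plane} (hu : u 0 ≤ 0) (hw : w 0 ≤ 0) :
    axisCrossing u w = 0 := by
  rw [axisCrossing, if_neg]
  rintro (⟨h₁, h₂, h₃⟩ | ⟨h₁, h₂, h₃⟩) <;> nlinarith

lemma axisCrossing_eq_add_of_pos {u w : Plane} (hu : 0 < u 0) (hw : 0 < w 0) :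
    axisCrossing u w = (if 0 < u 1 then 1 else 0) + if 0 < w 1 then 1 else 0 := by
  by_cases h : 0 < u 1 ↔ 0 < w 1
  · rw [axisCrossing_eq_zero h]
    simp only [h, CharTwo.add_self_eq_zero]
  · have : (0 < u 1 ∧ w 1 ≤ 0 ∧ 0 < w 0 * u 1 - u 0 * w 1) ∨
        (u 1 ≤ 0 ∧ 0 < w 1 ∧ 0 < u 0 * w 1 - w 0 * u 1) := by
      by_cases hu' : 0 < u 1
      · have hw' : w 1 ≤ 0 := by grind
        exact Or.inl ⟨hu', hw', by nlinarith [mul_pos hw hu']⟩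
      · have hw' : 0 < w 1 := by grind
        exact Or.inr ⟨not_lt.1 hu', hw', by nlinarith [mul_pos hu hw']⟩
    rw [axisCrossing, if_pos this]
    split_ifs <;> first | rfl | grind

/-- The point with indices `(i, j)` of the square grid of mesh `δ` with corner `(-L, -L)`. -/
noncomputable def gridPoint (L δ : ℝ) (i j : ℕ) : Plane := !₂[-L + i * δ, -L + j * δ]

section Grid

variable {L δ : ℝ}

lemma gridPoint_zero (i j : ℕ) : gridPoint L δ i j 0 = -L + i * δ := rfl

lemma gridPoint_one (i j : ℕ) : gridPoint L δ i j 1 = -L + j * δ := rfl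

lemma dist_gridPoint_le (hδ : 0 ≤ δ) {i j k l : ℕ} (hi : i ≤ k) (hk : k ≤ i + 1) (hj : j ≤ l)
    (hl : l ≤ j + 1) : dist (gridPoint L δ k l) (gridPoint L δ i j) ≤ 2 * δ := by
  have hi' : (i : ℝ) ≤ k := by exact_mod_cast hi
  have hk' : (k : ℝ) ≤ i + 1 := by exact_mod_cast hk
  have hj' : (j : ℝ) ≤ l := by exact_mod_cast hj
  have hl' : (l : ℝ) ≤ j + 1 := by exact_mod_cast hl
  rw [EuclideanSpace.dist_eq, Real.sqrt_le_left (by positivity), Fin.sum_univ_two,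
    Real.dist_eq, Real.dist_eq, sq_abs, sq_abs]
  simp only [gridPoint_zero, gridPoint_one]
  have h₁ : ((k - i : ℝ)) ^ 2 ≤ 1 := by nlinarith
  have h₂ : ((l - j : ℝ)) ^ 2 ≤ 1 := by nlinarith
  nlinarith [mul_nonneg (sq_nonneg δ) (sub_nonneg.2 h₁),
    mul_nonneg (sq_nonneg δ) (sub_nonneg.2 h₂), sq_nonneg δ]

end Grid

/-- The Boros–Füredi inequality for triples of points taken with repetition. -/
theorem exists_two_mul_cube_le_nearPairs {n : ℕ} (hn : 0 < n) (x : Fin n → Plane) :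
    ∃ r, 2 * n ^ 3 ≤ 9 * ∑ v, (nearPairs x 0 r v).card := by
  by_contra! hcon
  have hcheap : ∀ r, ∃ v, 9 * (nearPairs x 0 r v).card < 2 * n ^ 2 := by
    intro r
    by_contra! h
    have := Finset.sum_le_sum fun v (_ : v ∈ Finset.univ) => h v
    rw [Finset.sum_const, Finset.card_univ, Fintype.card_fin, smul_eq_mul,
      ← Finset.mul_sum] at this
    have := hcon r
    nlinarith
  set v₀ : Fin n := ⟨0, hn⟩
  obtain ⟨ε, hε, R, hR, V, hV, hxR, hfar⟩ := exists_uniform_nearPairs hn hcheap v₀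
  have hmaj : ∀ r s, dist s r ≤ ε → ∃ κ, IsMajority (side x r s (V r) (V s)) κ := fun r s hrs =>
    exists_isMajority (by simpa using hV r) (by simpa using hV s)
      fun a b => mem_nearPairs_of_side_ne hε.le hrs
  choose! κ hκ using hmaj
  have hcocycle : ∀ r s t, dist s r ≤ ε → dist t r ≤ ε → dist t s ≤ ε →
      κ r s + κ s t + κ r t = 0 := fun r s t hrs hrt hst =>
    majority_add_majority_add_majority hε.le hrs hrt (hV r) (hV t) (hκ r s hrs) (hκ s t hst)
      (hκ r t hrt)
  have hboundary : ∀ r s, dist s r ≤ ε → R < ‖r‖ → R < ‖s‖ →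
      κ r s = axisCrossing (x v₀ - r) (x v₀ - s) := by
    intro r s hrs hr hs
    have hconst : ∀ a, side x r s (V r) (V s) a = axisCrossing (x v₀ - r) (x v₀ - s) := by
      intro a
      have : side x r s (V r) (V s) a = side x r s (V r) (V s) v₀ := by
        by_contra hne
        have := mem_nearPairs_of_side_ne hε.le hrs hne
        simp [(hfar r hr).1, (hfar s hs).1, (hfar r hr).2, (hfar s hs).2] at this
      rw [this, (hfar r hr).1, (hfar s hs).1, side, axisCrossing_self, axisCrossing_self, zero_add,
        zero_add]
    by_contra hne
    have := hκ r s hrs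
    simp only [IsMajority, hconst, ne_eq, Ne.symm hne, not_false_eq_true, Finset.filter_true,
      Finset.card_univ] at this
    omega
  set L := R + 1 with hL
  obtain ⟨N, hN⟩ := exists_nat_gt (4 * L / ε)
  have hN0 : (0 : ℝ) < N := lt_of_le_of_lt (by positivity) hN
  set δ := 2 * L / N with hδ
  have hδ0 : 0 < δ := by positivity
  have hNδ : N * δ = 2 * L := by rw [hδ]; field_simp
  have hδε : 2 * δ ≤ ε := by
    rw [div_lt_iff₀ hε] at hN
    rw [hδ, ← mul_div_assoc, div_le_iff₀ hN0]
    linarith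
  set g := gridPoint L δ with hg
  have hdist : ∀ {i j k l : ℕ}, i ≤ k → k ≤ i + 1 → j ≤ l → l ≤ j + 1 →
      dist (g k l) (g i j) ≤ ε := fun hi hk hj hl =>
    (dist_gridPoint_le hδ0.le hi hk hj hl).trans hδε
  have hstokes := sum_boundary_eq_zero (h := fun i j => κ (g i j) (g (i + 1) j))
    (v := fun i j => κ (g i j) (g i (j + 1))) (by
      intro i j
      have h₁ := hcocycle (g i j) (g (i + 1) j) (g (i + 1) (j + 1))
        (hdist (by simp) (by simp) (by simp) (by simp))
        (hdist (by simp) (by simp) (by simp) (by simp))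
        (hdist (by simp) (by simp) (by simp) (by simp))
      have h₂ := hcocycle (g i j) (g i (j + 1)) (g (i + 1) (j + 1))
        (hdist (by simp) (by simp) (by simp) (by simp))
        (hdist (by simp) (by simp) (by simp) (by simp))
        (hdist (by simp) (by simp) (by simp) (by simp))
      have key : ∀ a b c d e : ZMod 2, a + b + e = 0 → c + d + e = 0 → a + b + (c + d) = 0 := by
        decide
      exact key _ _ _ _ _ h₁ h₂) N N
  have hfar_coord : ∀ (r : Plane) (k : Fin 2), |r k| = L → R < ‖r‖ := by
    intro r k hr
    have := PiLp.norm_apply_le r k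
    rw [Real.norm_eq_abs, hr] at this
    linarith
  have hx₀ : ∀ k, -L < x v₀ k ∧ x v₀ k < L := by
    intro k
    have := (PiLp.norm_apply_le (x v₀) k).trans (hxR v₀)
    rw [Real.norm_eq_abs, abs_le] at this
    constructor <;> linarith
  have hbot : ∀ i, κ (g i 0) (g (i + 1) 0) = 0 := by
    intro i
    rw [hboundary _ _ (hdist (by simp) (by simp) (by simp) (by simp))
      (hfar_coord _ 1 (by simp [hg, gridPoint_one, abs_of_pos, show 0 < L by linarith]))
      (hfar_coord _ 1 (by simp [hg, gridPoint_one, abs_of_pos, show 0 < L by linarith]))]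
    exact axisCrossing_eq_zero (by simp [hg, gridPoint_one])
  have htop : ∀ i, κ (g i N) (g (i + 1) N) = 0 := by
    intro i
    have hL' : -L + 2 * L = L := by ring
    rw [hboundary _ _ (hdist (by simp) (by simp) (by simp) (by simp))
      (hfar_coord _ 1 (by simp [hg, gridPoint_one, hNδ, hL', abs_of_pos, show 0 < L by linarith]))
      (hfar_coord _ 1 (by simp [hg, gridPoint_one, hNδ, hL', abs_of_pos, show 0 < L by linarith]))]
    exact axisCrossing_eq_zero (by simp [hg, gridPoint_one])
  have hright : ∀ j, κ (g N j) (g N (j + 1)) = 0 := by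
    intro j
    have hL' : -L + 2 * L = L := by ring
    rw [hboundary _ _ (hdist (by simp) (by simp) (by simp) (by simp))
      (hfar_coord _ 0 (by simp [hg, gridPoint_zero, hNδ, hL', abs_of_pos, show 0 < L by linarith]))
      (hfar_coord _ 0 (by simp [hg, gridPoint_zero, hNδ, hL', abs_of_pos, show 0 < L by linarith]))]
    apply axisCrossing_eq_zero_of_nonpos <;>
    · simp only [hg, PiLp.sub_apply, gridPoint_zero, hNδ]
      linarith [(hx₀ 0).2]
  have hleft : ∀ j, κ (g 0 j) (g 0 (j + 1)) =
      (if 0 < (x v₀ - g 0 (j + 1)) 1 then 1 else 0) - if 0 < (x v₀ - g 0 j) 1 then 1 else 0 := by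
    intro j
    rw [hboundary _ _ (hdist (by simp) (by simp) (by simp) (by simp))
      (hfar_coord _ 0 (by simp [hg, gridPoint_zero, abs_of_pos, show 0 < L by linarith]))
      (hfar_coord _ 0 (by simp [hg, gridPoint_zero, abs_of_pos, show 0 < L by linarith])),
      axisCrossing_eq_add_of_pos, CharTwo.sub_eq_add, add_comm]
    all_goals
      simp only [hg, PiLp.sub_apply, gridPoint_zero, Nat.cast_zero, zero_mul]
      linarith [(hx₀ 0).1]
  simp only [hbot, htop, hright, hleft, Finset.sum_const_zero, zero_add, add_zero] at hstokes
  rw [Finset.sum_range_sub fun j => if 0 < (x v₀ - g 0 j) 1 then (1 : ZMod 2) else 0,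
    if_neg, if_pos] at hstokes
  · simp at hstokes
  · simp only [hg, PiLp.sub_apply, gridPoint_one, Nat.cast_zero, zero_mul]
    linarith [(hx₀ 1).1]
  · simp only [hg, PiLp.sub_apply, gridPoint_one, hNδ]
    linarith [(hx₀ 1).2]

lemma exists_eq_smul_of_mem_segment {p q r : Plane} (h : r ∈ segment ℝ p q) (hr : p ≠ r) :
    ∃ t : ℝ, q = t • (r - p) +ᵥ p := by
  rw [segment_eq_image'] at h
  obtain ⟨θ, -, rfl⟩ := h
  have hθ : θ ≠ 0 := by
    rintro rfl
    simp at hr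
  refine ⟨θ⁻¹, ?_⟩
  simp [smul_smul, hθ]

section Counting

variable {n : ℕ} {x : Fin n → Plane}

open Classical in
/-- In general position, few segments between the points pass through a given point. -/
lemma card_mem_segment_le (hx : InGeneralPosition x) (r : Plane) :
    (Finset.univ.filter fun p : Fin n × Fin n => r ∈ segment ℝ (x p.1) (x p.2)).card ≤ 2 * n := by
  have hfibre : ∀ a, (∑ b, if r ∈ segment ℝ (x a) (x b) then 1 else 0) ≤
      1 + if x a = r then n else 0 := by
    intro a
    rw [← Finset.card_filter]
    split_ifs with ha
    · exact (Finset.card_le_univ _).trans (by simp)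
    · rw [add_zero, Finset.card_le_one]
      intro b hb c hc
      simp only [Finset.mem_filter, Finset.mem_univ, true_and] at hb hc
      by_contra hbc
      have hab : a ≠ b := by
        rintro rfl
        simp [Ne.symm ha] at hb
      have hac : a ≠ c := by
        rintro rfl
        simp [Ne.symm ha] at hc
      refine hx.2 a b c hab hac hbc ((collinear_iff_of_mem (p₀ := x a) (by simp)).2
        ⟨r - x a, ?_⟩)
      rintro _ (rfl | rfl | rfl)
      · exact ⟨0, by simp⟩
      · exact exists_eq_smul_of_mem_segment hb ha
      · exact exists_eq_smul_of_mem_segment hc ha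
  rw [Finset.card_filter, Fintype.sum_prod_type]
  refine (Finset.sum_le_sum fun a _ => hfibre a).trans ?_
  rw [Finset.sum_add_distrib, ← Finset.sum_filter, Finset.sum_const, Finset.sum_const]
  have : (Finset.univ.filter fun a => x a = r).card ≤ 1 := by
    rw [Finset.card_le_one]
    intro a ha b hb
    simp only [Finset.mem_filter, Finset.mem_univ, true_and] at ha hb
    exact hx.1 (ha.trans hb.symm)
  simp only [Finset.card_univ, Fintype.card_fin, smul_eq_mul]
  nlinarith

open Classical in
lemma card_ordered_triples_le (T : Finset (Finset (Fin n))) (hT : ∀ t ∈ T, t.card = 3)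
    (I : Finset (Fin n × Fin n × Fin n)) (hI : ∀ p ∈ I, {p.1, p.2.1, p.2.2} ∈ T) :
    I.card ≤ 6 * T.card := by
  refine Finset.card_le_mul_card_image_of_maps_to (f := fun p => {p.1, p.2.1, p.2.2}) hI 6 ?_
  intro t ht
  obtain ⟨a, b, c, hab, hac, hbc, rfl⟩ := Finset.card_eq_three.1 (hT t ht)
  refine (Finset.card_le_card (t := {(a, b, c), (a, c, b), (b, a, c), (b, c, a), (c, a, b),
    (c, b, a)}) ?_).trans Finset.card_le_six
  rintro ⟨u, v, w⟩ hp
  have e := (Finset.mem_filter.1 hp).2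
  simp only at e
  have hu : u ∈ ({a, b, c} : Finset (Fin n)) := e ▸ by simp
  have hv : v ∈ ({a, b, c} : Finset (Fin n)) := e ▸ by simp
  have hw : w ∈ ({a, b, c} : Finset (Fin n)) := e ▸ by simp
  have ha : a ∈ ({u, v, w} : Finset (Fin n)) := e ▸ by simp
  have hb : b ∈ ({u, v, w} : Finset (Fin n)) := e ▸ by simp
  have hc : c ∈ ({u, v, w} : Finset (Fin n)) := e ▸ by simp
  simp only [Finset.mem_insert, Finset.mem_singleton, Prod.mk.injEq] at *
  grind

open Classical in
/-- Comparison of the triples with repetition with the nondegenerate triangles. -/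
lemma sum_card_nearPairs_le (hx : InGeneralPosition x) (r : Plane) :
    ∑ v, (nearPairs x 0 r v).card ≤ 6 * (((Finset.univ : Finset (Fin n)).powersetCard 3).filter
      (fun t : Finset (Fin n) => r ∈ convexHull ℝ (x '' (t : Set (Fin n))))).card + 6 * n := by
  set T := ((Finset.univ : Finset (Fin n)).powersetCard 3).filter
    (fun t : Finset (Fin n) => r ∈ convexHull ℝ (x '' (t : Set (Fin n)))) with hTdef
  set Q := Finset.univ.filter fun p : Fin n × Fin n => r ∈ segment ℝ (x p.1) (x p.2) with hQ
  set S := Finset.univ.filter fun p : Fin n × Fin n × Fin n =>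
    r ∈ convexHull ℝ {x p.1, x p.2.1, x p.2.2} with hS
  set I := S.filter fun p => p.1 ≠ p.2.1 ∧ p.1 ≠ p.2.2 ∧ p.2.1 ≠ p.2.2 with hI
  have hSsum : ∑ v, (nearPairs x 0 r v).card = S.card := by
    rw [hS, Finset.card_filter, Fintype.sum_prod_type]
    refine Finset.sum_congr rfl fun v _ => ?_
    rw [nearPairs, Finset.card_filter]
    simp
  have hIT : I.card ≤ 6 * T.card := by
    refine card_ordered_triples_le T (fun t ht => ?_) I fun p hp => ?_
    · exact (Finset.mem_powersetCard.1 (Finset.mem_filter.1 ht).1).2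
    · simp only [hI, hS, Finset.mem_filter, Finset.mem_univ, true_and] at hp
      simp only [hTdef, Finset.mem_filter, Finset.mem_powersetCard, Finset.subset_univ, true_and]
      refine ⟨Finset.card_eq_three.2 ⟨_, _, _, hp.2.1, hp.2.2.1, hp.2.2.2, rfl⟩, ?_⟩
      simpa [Set.image_insert_eq] using hp.1
  have hcover : S ⊆ I ∪ (Q.image (fun p => (p.1, p.1, p.2)) ∪
      (Q.image (fun p => (p.1, p.2, p.1)) ∪ Q.image fun p => (p.1, p.2, p.2))) := by
    rintro ⟨a, b, c⟩ hp
    by_cases hinj : a ≠ b ∧ a ≠ c ∧ b ≠ c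
    · exact Finset.mem_union_left _ (Finset.mem_filter.2 ⟨hp, hinj⟩)
    · refine Finset.mem_union_right _ ?_
      have hr : r ∈ convexHull ℝ {x a, x b, x c} := (Finset.mem_filter.1 hp).2
      have : a = b ∨ a = c ∨ b = c := by tauto
      simp only [Finset.mem_union, Finset.mem_image, hQ, Finset.mem_filter, Finset.mem_univ,
        true_and]
      rcases this with rfl | rfl | rfl
      · exact Or.inl ⟨(a, c), by simpa [convexHull_pair] using hr, rfl⟩
      · refine Or.inr (Or.inl ⟨(a, b), ?_, rfl⟩)
        rw [Set.pair_comm] at hr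
        simpa [convexHull_pair] using hr
      · exact Or.inr (Or.inr ⟨(a, b), by simpa [convexHull_pair] using hr, rfl⟩)
  have hQcard : Q.card ≤ 2 * n := card_mem_segment_le hx r
  have h₁ : (Q.image fun p => (p.1, p.1, p.2)).card ≤ Q.card := Finset.card_image_le
  have h₂ : (Q.image fun p => (p.1, p.2, p.1)).card ≤ Q.card := Finset.card_image_le
  have h₃ : (Q.image fun p => (p.1, p.2, p.2)).card ≤ Q.card := Finset.card_image_le
  have h₄ := Finset.card_union_le (Q.image fun p => (p.1, p.2, p.1))
    (Q.image fun p => (p.1, p.2, p.2))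
  have h₅ := Finset.card_union_le (Q.image fun p => (p.1, p.1, p.2))
    ((Q.image fun p => (p.1, p.2, p.1)) ∪ Q.image fun p => (p.1, p.2, p.2))
  have h₆ := (Finset.card_le_card hcover).trans (Finset.card_union_le _ _)
  omega

open Classical in
/-- A vertex lies in all the triangles which it spans with two of the other points. -/
lemma choose_two_le_card_triangles (x : Fin n → Plane) (a : Fin n) :
    (n - 1).choose 2 ≤ (((Finset.univ : Finset (Fin n)).powersetCard 3).filter
      (fun t : Finset (Fin n) => x a ∈ convexHull ℝ (x '' (t : Set (Fin n))))).card := by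
  have hcard : (((Finset.univ : Finset (Fin n)).erase a).powersetCard 2).card =
      (n - 1).choose 2 := by
    simp [Finset.card_powersetCard, Finset.card_erase_of_mem]
  rw [← hcard]
  refine Finset.card_le_card_of_injOn (insert a) (fun t ht => ?_) fun s hs t ht hst => ?_
  · rw [Finset.mem_coe, Finset.mem_powersetCard] at ht
    have ha : a ∉ t := fun h => Finset.notMem_erase a _ (ht.1 h)
    simp only [Finset.coe_filter, Finset.mem_powersetCard, Finset.subset_univ, true_and,
      Set.mem_ofPred_eq]
    exact ⟨by rw [Finset.card_insert_of_notMem ha, ht.2],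
      subset_convexHull _ _ ⟨a, by simp, rfl⟩⟩
  · rw [Finset.mem_coe, Finset.mem_powersetCard] at hs ht
    rw [← Finset.erase_insert fun h => Finset.notMem_erase a _ (hs.1 h), hst,
      Finset.erase_insert fun h => Finset.notMem_erase a _ (ht.1 h)]

end Counting

open Classical in
/-- Filtering a family of finite sets after coercing its members to sets does not change the
number of members. -/
lemma card_filter_coe {α : Type*} (S : Finset (Finset α)) (p : Set α → Prop) :
    (((S >>= fun t => pure (t : Set α)) : Finset (Set α)).filter p).card =
      (S.filter fun t : Finset α => p t).card := by
  have hS : ((S >>= fun t => pure (t : Set α)) : Finset (Set α)) =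
      S.image fun t : Finset α => (t : Set α) := by
    ext s
    simp [Finset.bind_def, eq_comm]
  rw [hS, Finset.filter_image, Finset.card_image_of_injective _ Finset.coe_injective]

open Classical in
/-- Boros–Füredi: some point of the plane is covered by at least a `2/9`
fraction of the `n.choose 3` triangles spanned by `n` points in general
position. -/
theorem stmt_9 (n : ℕ) (x : Fin n → EuclideanSpace ℝ (Fin 2))
    (hx : InGeneralPosition x) :
    ∃ r : EuclideanSpace ℝ (Fin 2),
      (2 / 9 : ℝ) * (n.choose 3) ≤
        (((Finset.univ : Finset (Fin n)).powersetCard 3).filter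
          (fun t => r ∈ convexHull ℝ (x '' ↑t))).card := by
  rcases Nat.eq_zero_or_pos n with rfl | hn
  · exact ⟨0, by simp⟩
  rcases le_or_gt n 13 with hsmall | hlarge
  · refine ⟨x ⟨0, hn⟩, ?_⟩
    rw [card_filter_coe _ fun s => x ⟨0, hn⟩ ∈ convexHull ℝ (x '' s)]
    refine le_trans ?_ (Nat.cast_le.2 (choose_two_le_card_triangles x ⟨0, hn⟩))
    clear hx x
    interval_cases n <;> norm_num [Nat.choose]
  · obtain ⟨r, hr⟩ := exists_two_mul_cube_le_nearPairs hn x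
    refine ⟨r, ?_⟩
    rw [card_filter_coe _ fun s => r ∈ convexHull ℝ (x '' s)]
    have hcount := hr.trans (Nat.mul_le_mul_left 9 (sum_card_nearPairs_le hx r))
    rw [← Nat.cast_le (α := ℝ)] at hcount
    push_cast at hcount
    have hchoose : (n.choose 3 : ℝ) = n * (n - 1) * (n - 2) / 6 := by
      rw [Nat.cast_choose_eq_descPochhammer_div]
      simp [descPochhammer_succ_right, Nat.factorial]
    have hlarge' : (14 : ℝ) ≤ n := by exact_mod_cast hlarge
    rw [hchoose]
    nlinarith
end

section
/- (Affine instance of Gromov's overlap theorem) Let x₁,…,xₙ be n points in ℝ² in general position. Then there exists a point r ∈ ℝ² such that the number of 3-element subsets t ⊆ {1,…,n} with r ∈ conv{xᵢ : i ∈ t} is at least (2/9 − 3/n)·binom(n,3). -/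
open MeasureTheory Filter Topology

/-- The weighted count behind the constant `2 / 9`: of the `216` ordered triples of classes, `48`
are covered on average, namely the cyclic ones and half of those containing two opposite classes. -/
theorem sum_ge_of_six_classes {ι : Type*} [Fintype ι] (p : ι → Fin 6 → ℝ)
    (τ : ι → ι → ι → ℝ) (m : ℝ) (hm : 0 ≤ m) (hp : ∀ k j, 0 ≤ p k j)
    (hrow : ∀ k, ∑ j, p k j ≤ 1) (hcol : ∀ j, m ≤ ∑ k, p k j)
    (hτ : ∀ a b c, 0 ≤ τ a b c) (hswap : ∀ a b c, τ a b c = τ b a c)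
    (hrot : ∀ a b c, τ a b c = τ b c a)
    (hcyc : ∀ i a b c, 0 < p a i → 0 < p b (i + 2) → 0 < p c (i + 4) → 1 ≤ τ a b c)
    (hopp : ∀ i a b, 0 < p a i → 0 < p b (i + 3) →
      (∀ c, (0 < p c (i + 1) → 1 ≤ τ a b c) ∧ (0 < p c (i + 2) → 1 ≤ τ a b c)) ∨
      (∀ c, (0 < p c (i + 4) → 1 ≤ τ a b c) ∧ (0 < p c (i + 5) → 1 ≤ τ a b c))) :
    48 * m ^ 3 ≤ ∑ a, ∑ b, ∑ c, τ a b c := by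
  set W : Fin 6 → Fin 6 → Fin 6 → ℝ := fun i j l =>
    ∑ a, ∑ b, ∑ c, p a i * p b j * (p c l * τ a b c) with hW
  have hWnonneg : ∀ i j l, 0 ≤ W i j l := fun i j l =>
    Finset.sum_nonneg fun a _ => Finset.sum_nonneg fun b _ => Finset.sum_nonneg fun c _ =>
      mul_nonneg (mul_nonneg (hp _ _) (hp _ _)) (mul_nonneg (hp _ _) (hτ _ _ _))
  have hWswap : ∀ i j l, W i j l = W j i l := by
    intro i j l
    simp only [hW]
    rw [Finset.sum_comm]
    refine Finset.sum_congr rfl fun a _ => Finset.sum_congr rfl fun b _ =>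
      Finset.sum_congr rfl fun c _ => ?_
    rw [hswap b a c]; ring
  have hWrot : ∀ i j l, W i j l = W j l i := by
    intro i j l
    simp only [hW]
    rw [Finset.sum_comm]
    refine Finset.sum_congr rfl fun a _ => ?_
    rw [Finset.sum_comm]
    refine Finset.sum_congr rfl fun b _ => Finset.sum_congr rfl fun c _ => ?_
    rw [hrot c a b]; ring
  have hpair : ∀ i j, m ^ 2 ≤ ∑ a, ∑ b, p a i * p b j := by
    intro i j
    rw [← Finset.sum_mul_sum, sq]
    exact mul_le_mul (hcol i) (hcol j) hm (hm.trans (hcol i))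
  have hcube : ∀ i j, m ^ 3 ≤ ∑ a, ∑ b, p a i * p b j * m := by
    intro i j
    simp only [← Finset.sum_mul]
    nlinarith [hpair i j]
  have hle : ∀ a b l, (∀ c, 0 < p c l → 1 ≤ τ a b c) → m ≤ ∑ c, p c l * τ a b c := by
    intro a b l h
    refine (hcol l).trans (Finset.sum_le_sum fun c _ => ?_)
    rcases (hp c l).eq_or_lt with h0 | h0
    · rw [← h0, zero_mul]
    · nlinarith [h c h0]
  have hWcyc : ∀ i, m ^ 3 ≤ W i (i + 2) (i + 4) := by
    intro i
    refine (hcube i (i + 2)).trans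
      (Finset.sum_le_sum fun a _ => Finset.sum_le_sum fun b _ => ?_)
    rw [← Finset.mul_sum]
    rcases (hp a i).eq_or_lt with h0 | h0
    · simp [← h0]
    rcases (hp b (i + 2)).eq_or_lt with h1 | h1
    · simp [← h1]
    exact mul_le_mul_of_nonneg_left (hle a b _ fun c hc => hcyc i a b c h0 h1 hc)
      (mul_pos h0 h1).le
  have hWopp : ∀ i l l', (l = i + 1 ∨ l = i + 2) → (l' = i + 4 ∨ l' = i + 5) →
      m ^ 3 ≤ W i (i + 3) l + W i (i + 3) l' := by
    intro i l l' hl hl'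
    simp only [hW, ← Finset.sum_add_distrib]
    refine (hcube i (i + 3)).trans
      (Finset.sum_le_sum fun a _ => Finset.sum_le_sum fun b _ => ?_)
    rw [Finset.sum_add_distrib, ← Finset.mul_sum, ← Finset.mul_sum, ← mul_add]
    rcases (hp a i).eq_or_lt with h0 | h0
    · simp [← h0]
    rcases (hp b (i + 3)).eq_or_lt with h1 | h1
    · simp [← h1]
    refine mul_le_mul_of_nonneg_left ?_ (mul_pos h0 h1).le
    have hs : ∀ l, 0 ≤ ∑ c, p c l * τ a b c := fun l =>
      Finset.sum_nonneg fun c _ => mul_nonneg (hp _ _) (hτ _ _ _)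
    rcases hopp i a b h0 h1 with h | h
    · have : m ≤ ∑ c, p c l * τ a b c := by
        refine hle a b l fun c hc => ?_
        rcases hl with rfl | rfl
        exacts [(h c).1 hc, (h c).2 hc]
      linarith [hs l']
    · have : m ≤ ∑ c, p c l' * τ a b c := by
        refine hle a b l' fun c hc => ?_
        rcases hl' with rfl | rfl
        exacts [(h c).1 hc, (h c).2 hc]
      linarith [hs l]
  have htotal : ∑ i, ∑ j, ∑ l, W i j l ≤ ∑ a, ∑ b, ∑ c, τ a b c := by
    have : ∑ i, ∑ j, ∑ l, W i j l =
        ∑ a, ∑ b, ∑ c, (∑ i, p a i) * (∑ j, p b j) * (∑ l, p c l) * τ a b c := by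
      have e : ∀ a b c, (∑ i, p a i) * (∑ j, p b j) * (∑ l, p c l) * τ a b c =
          ∑ i, ∑ j, ∑ l, p a i * p b j * (p c l * τ a b c) := by
        intro a b c
        simp only [← Finset.mul_sum, ← Finset.sum_mul, mul_assoc]
      simp only [e, hW]
      simp only [← Fintype.sum_prod_type']
      exact Fintype.sum_equiv
        ⟨fun x => (x.2.2.2.1, x.2.2.2.2.1, x.2.2.2.2.2, x.1, x.2.1, x.2.2.1),
          fun x => (x.2.2.2.1, x.2.2.2.2.1, x.2.2.2.2.2, x.1, x.2.1, x.2.2.1),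
          fun _ => rfl, fun _ => rfl⟩ _ _ fun _ => rfl
    rw [this]
    have hr : ∀ a, 0 ≤ ∑ i, p a i := fun a => Finset.sum_nonneg fun i _ => hp a i
    refine Finset.sum_le_sum fun a _ => Finset.sum_le_sum fun b _ =>
      Finset.sum_le_sum fun c _ => ?_
    refine mul_le_of_le_one_left (hτ a b c) ?_
    exact mul_le_one₀ (mul_le_one₀ (hrow a) (hr b) (hrow b)) (hr c) (hrow c)
  have hshift : ∀ i, W i (i + 2) (i + 4) + W i (i + 4) (i + 2)
      + (W i (i + 3) (i + 1) + W i (i + 3) (i + 2) + W i (i + 3) (i + 4) + W i (i + 3) (i + 5))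
      + (W i (i + 1) (i + 3) + W i (i + 2) (i + 3) + W i (i + 4) (i + 3) + W i (i + 5) (i + 3))
      + (W i (i + 1) (i + 4) + W i (i + 2) (i + 5) + W i (i + 4) (i + 1) + W i (i + 5) (i + 2))
      ≤ ∑ j, ∑ l, W i j l := by
    intro i
    have : ∑ j, ∑ l, W i j l = ∑ d, ∑ e, W i (i + d) (i + e) := by
      rw [← Equiv.sum_comp (Equiv.addLeft i)]
      refine Finset.sum_congr rfl fun d _ => ?_
      rw [← Equiv.sum_comp (Equiv.addLeft i)]
      rfl
    rw [this]
    have h := fun d e => hWnonneg i (i + d) (i + e)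
    simp only [Fin.sum_univ_six]
    linarith [h 0 0, h 0 1, h 0 2, h 0 3, h 0 4, h 0 5, h 1 0, h 2 0, h 3 0, h 4 0, h 5 0,
      h 1 1, h 2 2, h 3 3, h 4 4, h 5 5, h 1 2, h 2 1, h 1 5, h 5 1, h 4 5, h 5 4]
  refine le_trans ?_ ((Finset.sum_le_sum fun i _ => hshift i).trans htotal)
  have hmove : ∀ d e : Fin 6, d + e = 0 →
      ∑ i, W i (i + d) (i + (d + 3)) = ∑ i, W i (i + 3) (i + e) := by
    intro d e hde
    rw [← Equiv.sum_comp (Equiv.addRight d) fun i => W i (i + 3) (i + e)]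
    refine Finset.sum_congr rfl fun i _ => ?_
    simp only [Equiv.coe_addRight, add_assoc, hde, add_zero]
    exact hWrot _ _ _
  have h1 := hmove 1 5 rfl
  have h2 := hmove 2 4 rfl
  have h4 := hmove 4 2 rfl
  have h5 := hmove 5 1 rfl
  have hlast : ∀ i j l, W i l j = W i j l := fun i j l => by rw [hWrot, hWswap, hWrot, hWrot]
  have hA : 6 * m ^ 3 ≤ ∑ i, W i (i + 2) (i + 4) := by
    simpa using Finset.sum_le_sum fun i (_ : i ∈ Finset.univ) => hWcyc i
  have hB : 6 * m ^ 3 ≤ ∑ i, W i (i + 3) (i + 1) + ∑ i, W i (i + 3) (i + 4) := by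
    simpa [Finset.sum_add_distrib] using Finset.sum_le_sum fun i (_ : i ∈ Finset.univ) =>
      hWopp i (i + 1) (i + 4) (.inl rfl) (.inl rfl)
  have hC : 6 * m ^ 3 ≤ ∑ i, W i (i + 3) (i + 2) + ∑ i, W i (i + 3) (i + 5) := by
    simpa [Finset.sum_add_distrib] using Finset.sum_le_sum fun i (_ : i ∈ Finset.univ) =>
      hWopp i (i + 2) (i + 5) (.inr rfl) (.inr rfl)
  simp only [Finset.sum_add_distrib]
  have e2 : ∀ i, W i (i + 4) (i + 2) = W i (i + 2) (i + 4) := fun i => hlast _ _ _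
  have e3 : ∀ i d, W i (i + d) (i + 3) = W i (i + 3) (i + d) := fun i d => hlast _ _ _
  simp only [e2, e3, show (1 + 3 : Fin 6) = 4 from rfl, show (2 + 3 : Fin 6) = 5 from rfl,
    show (4 + 3 : Fin 6) = 1 from rfl, show (5 + 3 : Fin 6) = 2 from rfl] at h1 h2 h4 h5 ⊢
  linarith

/-- The signed distance to the line through the origin in direction `θ`, positive on its left. -/
noncomputable def leftForm (θ : ℝ) (x : EuclideanSpace ℝ (Fin 2)) : ℝ :=
  Real.cos θ * x 1 - Real.sin θ * x 0

theorem leftForm_add_pi (θ : ℝ) (x : EuclideanSpace ℝ (Fin 2)) :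
    leftForm (θ + Real.pi) x = -leftForm θ x := by
  simp only [leftForm, Real.cos_add_pi, Real.sin_add_pi]; ring

theorem leftForm_add (θ : ℝ) (x y : EuclideanSpace ℝ (Fin 2)) :
    leftForm θ (x + y) = leftForm θ x + leftForm θ y := by
  simp [leftForm]; ring

theorem leftForm_smul (θ s : ℝ) (x : EuclideanSpace ℝ (Fin 2)) :
    leftForm θ (s • x) = s * leftForm θ x := by
  simp [leftForm]; ring

theorem continuous_leftForm_right (θ : ℝ) : Continuous (leftForm θ) := by
  unfold leftForm; fun_prop

theorem continuous_leftForm_left (x : EuclideanSpace ℝ (Fin 2)) :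
    Continuous fun θ => leftForm θ x := by
  unfold leftForm; fun_prop

/-- The linear relation between the forms of three directions. -/
theorem sin_mul_leftForm (θ α β : ℝ) (x : EuclideanSpace ℝ (Fin 2)) :
    Real.sin β * leftForm (θ + α) x =
      Real.sin (β - α) * leftForm θ x + Real.sin α * leftForm (θ + β) x := by
  simp only [leftForm, Real.cos_add, Real.sin_add, Real.sin_sub]
  ring

theorem exists_leftForm_eq {β : ℝ} (hβ : Real.sin β ≠ 0) (θ s t : ℝ) :
    ∃ x, leftForm θ x = s ∧ leftForm (θ + β) x = t := by
  have key : Real.sin (θ + β) * Real.cos θ - Real.cos (θ + β) * Real.sin θ = Real.sin β := by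
    rw [← Real.sin_sub]; ring_nf
  refine ⟨!₂[(s * Real.cos (θ + β) - t * Real.cos θ) / Real.sin β,
    (s * Real.sin (θ + β) - t * Real.sin θ) / Real.sin β], ?_, ?_⟩
  all_goals
    simp only [leftForm, Matrix.cons_val_zero, Matrix.cons_val_one, Matrix.cons_val_fin_one]
    field_simp
    rw [← key]; ring

theorem exists_continuous_eq_of_strictMonoOn {F : ℝ → ℝ → ℝ} (hF : ∀ a, Continuous fun θ => F θ a)
    {S : Set ℝ} (hS : IsOpen S) (hmono : ∀ θ, StrictMonoOn (F θ) S) {k : ℝ}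
    (hex : ∀ θ, ∃ a ∈ S, F θ a = k) :
    ∃ f : ℝ → ℝ, Continuous f ∧ (∀ θ, f θ ∈ S) ∧ ∀ θ, F θ (f θ) = k := by
  choose f hfS hfk using hex
  refine ⟨f, continuous_iff_continuousAt.2 fun θ => ?_, hfS, hfk⟩
  obtain ⟨ε, hε, hball⟩ := Metric.isOpen_iff.1 hS (f θ) (hfS θ)
  refine Metric.tendsto_nhds.2 fun δ hδ => ?_
  set η := min δ ε / 2 with hη
  have hη0 : 0 < η := by positivity
  have hηδ : η < δ := by have := min_le_left δ ε; linarith [lt_min hδ hε]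
  have hηε : η < ε := by have := min_le_right δ ε; linarith [lt_min hδ hε]
  have hlo : f θ - η ∈ S := hball (by simp [abs_of_pos hη0, hηε])
  have hhi : f θ + η ∈ S := hball (by simp [abs_of_pos hη0, hηε])
  have h1 : F θ (f θ - η) < k := hfk θ ▸ hmono θ hlo (hfS θ) (by linarith)
  have h2 : k < F θ (f θ + η) := hfk θ ▸ hmono θ (hfS θ) hhi (by linarith)
  filter_upwards [(hF (f θ - η)).continuousAt.eventually_lt continuousAt_const h1,
    continuousAt_const.eventually_lt (hF (f θ + η)).continuousAt h2] with θ' h1' h2'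
  rw [← hfk θ'] at h1' h2'
  have h1'' := ((hmono θ').lt_iff_lt hlo (hfS θ')).1 h1'
  have h2'' := ((hmono θ').lt_iff_lt (hfS θ') hhi).1 h2'
  rw [Real.dist_eq, abs_lt]
  constructor <;> linarith

section
variable {E : Type*} [MeasurableSpace E] {μ : Measure E} [IsFiniteMeasure μ]

theorem tendsto_measureReal_of_ae_eventually {X : Type*} {l : Filter X} [l.IsCountablyGenerated]
    {A : X → Set E} {B : Set E} (hA : ∀ p, MeasurableSet (A p)) (hB : MeasurableSet B)
    (h : ∀ᵐ x ∂μ, ∀ᶠ p in l, x ∈ A p ↔ x ∈ B) :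
    Tendsto (fun p => μ.real (A p)) l (𝓝 (μ.real B)) :=
  (ENNReal.tendsto_toReal (measure_ne_top μ B)).comp
    (tendsto_measure_of_ae_tendsto_indicator_of_isFiniteMeasure l hB hA h)

theorem continuous_measureReal {X : Type*} [TopologicalSpace X] [FirstCountableTopology X]
    {A : X → Set E} (hA : ∀ p, MeasurableSet (A p))
    (h : ∀ p, ∀ᵐ x ∂μ, ∀ᶠ q in 𝓝 p, x ∈ A q ↔ x ∈ A p) :
    Continuous fun p => μ.real (A p) :=
  continuous_iff_continuousAt.2 fun p => tendsto_measureReal_of_ae_eventually hA (hA p) (h p)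

end

theorem eventually_lt_iff_of_ne {X : Type*} [TopologicalSpace X] {u v : X → ℝ} {p : X}
    (hu : ContinuousAt u p) (hv : ContinuousAt v p) (h : v p ≠ u p) :
    ∀ᶠ q in 𝓝 p, u q < v q ↔ u p < v p := by
  rcases h.lt_or_gt with h | h
  · filter_upwards [hv.eventually_lt hu h] with q hq
    exact iff_of_false hq.le.not_gt h.le.not_gt
  · filter_upwards [hu.eventually_lt hv h] with q hq
    exact iff_of_true hq h

/-- The open half-plane to the left of a line of direction `θ`. -/
def leftHalfPlane (θ c : ℝ) : Set (EuclideanSpace ℝ (Fin 2)) := {x | c < leftForm θ x}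

theorem isOpen_leftHalfPlane (θ c : ℝ) : IsOpen (leftHalfPlane θ c) :=
  isOpen_lt continuous_const (continuous_leftForm_right θ)

theorem measurableSet_leftHalfPlane (θ c : ℝ) : MeasurableSet (leftHalfPlane θ c) :=
  (isOpen_leftHalfPlane θ c).measurableSet

theorem ae_leftForm_ne {μ : Measure (EuclideanSpace ℝ (Fin 2))}
    (hline : ∀ θ c, μ {x | leftForm θ x = c} = 0) (θ c : ℝ) :
    ∀ᵐ x ∂μ, leftForm θ x ≠ c := by
  simpa [ae_iff] using hline θ c

theorem leftHalfPlane_add_pi_ae_eq_compl {μ : Measure (EuclideanSpace ℝ (Fin 2))}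
    (hline : ∀ θ c, μ {x | leftForm θ x = c} = 0) (θ c : ℝ) :
    leftHalfPlane (θ + Real.pi) (-c) =ᵐ[μ]
      ((leftHalfPlane θ c)ᶜ : Set (EuclideanSpace ℝ (Fin 2))) := by
  rw [eventuallyEq_set]
  filter_upwards [ae_leftForm_ne hline θ c] with x hx
  simp only [leftHalfPlane, Set.mem_compl_iff, Set.mem_ofPred_eq, leftForm_add_pi, neg_lt_neg_iff,
    not_lt]
  exact ⟨le_of_lt, fun h => lt_of_le_of_ne h hx⟩

section Partition

variable {μ : Measure (EuclideanSpace ℝ (Fin 2))} [IsFiniteMeasure μ] [μ.IsOpenPosMeasure]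

theorem measureReal_pos_of_mem_isOpen {U V : Set (EuclideanSpace ℝ (Fin 2))} (hU : IsOpen U)
    {x : EuclideanSpace ℝ (Fin 2)} (hx : x ∈ U) (hUV : U ⊆ V) : 0 < μ.real V :=
  (ENNReal.toReal_pos (hU.measure_pos μ ⟨x, hx⟩).ne' (measure_ne_top μ U)).trans_le
    (measureReal_mono hUV)

/-- Every direction has a unique halving line, depending continuously on the direction. -/
theorem exists_continuous_halving (hline : ∀ θ c, μ {x | leftForm θ x = c} = 0) :
    ∃ c : ℝ → ℝ, Continuous c ∧ (∀ θ, μ.real (leftHalfPlane θ (c θ)) = μ.real Set.univ / 2) ∧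
      ∀ θ, c (θ + Real.pi) = -c θ := by
  have hpos : 0 < μ.real Set.univ :=
    measureReal_pos_of_mem_isOpen isOpen_univ (Set.mem_univ 0) subset_rfl
  have hcont : Continuous fun q : ℝ × ℝ => μ.real (leftHalfPlane q.1 q.2) := by
    refine continuous_measureReal (A := fun q : ℝ × ℝ => leftHalfPlane q.1 q.2)
      (fun _ => measurableSet_leftHalfPlane _ _) fun q => ?_
    filter_upwards [ae_leftForm_ne hline q.1 q.2] with x hx
    exact eventually_lt_iff_of_ne (p := q) (u := fun p : ℝ × ℝ => p.2)
      (v := fun p : ℝ × ℝ => leftForm p.1 x) continuousAt_snd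
      ((continuous_leftForm_left x).comp continuous_fst).continuousAt hx
  have hanti : ∀ θ, StrictAnti fun c => μ.real (leftHalfPlane θ c) := by
    intro θ a b hab
    obtain ⟨x, hx, -⟩ := exists_leftForm_eq (β := Real.pi / 2) (by simp) θ ((a + b) / 2) 0
    have h0 : 0 < μ.real (leftHalfPlane θ a \ leftHalfPlane θ b) := by
      refine measureReal_pos_of_mem_isOpen (U := {x | a < leftForm θ x ∧ leftForm θ x < b})
        ((isOpen_lt continuous_const (continuous_leftForm_right θ)).inter
          (isOpen_lt (continuous_leftForm_right θ) continuous_const))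
        (x := x) ⟨by linarith, by linarith⟩ fun y hy => ⟨hy.1, hy.2.le.not_gt⟩
    have hsub : leftHalfPlane θ b ⊆ leftHalfPlane θ a := fun y hy => hab.trans hy
    rw [measureReal_sdiff hsub (measurableSet_leftHalfPlane _ _)] at h0
    simpa using h0
  have htop : ∀ θ, Tendsto (fun c => μ.real (leftHalfPlane θ c)) atTop (𝓝 0) := by
    intro θ
    rw [← measureReal_empty (μ := μ)]
    refine tendsto_measureReal_of_ae_eventually (A := fun c => leftHalfPlane θ c)
      (fun _ => measurableSet_leftHalfPlane _ _) .empty (Eventually.of_forall fun x => ?_)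
    filter_upwards [eventually_ge_atTop (leftForm θ x)] with c hc
    exact iff_of_false hc.not_gt id
  have hbot : ∀ θ, Tendsto (fun c => μ.real (leftHalfPlane θ c)) atBot (𝓝 (μ.real Set.univ)) := by
    intro θ
    refine tendsto_measureReal_of_ae_eventually (A := fun c => leftHalfPlane θ c)
      (fun _ => measurableSet_leftHalfPlane _ _) .univ (Eventually.of_forall fun x => ?_)
    filter_upwards [eventually_lt_atBot (leftForm θ x)] with c hc
    exact iff_of_true hc trivial
  obtain ⟨c, hc, -, hhalf⟩ := exists_continuous_eq_of_strictMonoOn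
    (F := fun θ a => -μ.real (leftHalfPlane θ a)) (S := Set.univ) (k := -(μ.real Set.univ / 2))
    (fun a => (hcont.comp (Continuous.prodMk_left a)).neg) isOpen_univ
    (fun θ => fun a _ b _ hab => neg_lt_neg (hanti θ hab)) (by
      intro θ
      obtain ⟨a, ha⟩ := mem_range_of_exists_le_of_exists_ge
        (hcont.comp (Continuous.prodMk_right θ))
        (((htop θ).eventually_lt_const (half_pos hpos)).exists.imp fun _ h => h.le)
        (((hbot θ).eventually_const_lt (half_lt_self hpos)).exists.imp fun _ h => h.le)
      exact ⟨a, trivial, congrArg Neg.neg ha⟩)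
  have hhalf' : ∀ θ, μ.real (leftHalfPlane θ (c θ)) = μ.real Set.univ / 2 := fun θ =>
    neg_injective (hhalf θ)
  refine ⟨c, hc, hhalf', fun θ => (hanti (θ + Real.pi)).injective ?_⟩
  rw [hhalf', measureReal_congr (leftHalfPlane_add_pi_ae_eq_compl hline θ (c θ)),
    measureReal_compl (measurableSet_leftHalfPlane _ _), hhalf']
  ring

theorem measureReal_wedge_lt (c : ℝ → ℝ)
    (hhalf : ∀ θ, μ.real (leftHalfPlane θ (c θ)) = μ.real Set.univ / 2) {θ α β : ℝ}
    (hα : 0 < α) (hαβ : α < β) (hβ : β < Real.pi) :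
    μ.real (leftHalfPlane θ (c θ) \ leftHalfPlane (θ + α) (c (θ + α))) <
      μ.real (leftHalfPlane θ (c θ) \ leftHalfPlane (θ + β) (c (θ + β))) := by
  have sα : 0 < Real.sin α := Real.sin_pos_of_pos_of_lt_pi hα (hαβ.trans hβ)
  have sβ : 0 < Real.sin β := Real.sin_pos_of_pos_of_lt_pi (hα.trans hαβ) hβ
  have sd : 0 < Real.sin (β - α) := Real.sin_pos_of_pos_of_lt_pi (by linarith) (by linarith)
  have hrel := sin_mul_leftForm θ α β
  set P := leftHalfPlane θ (c θ) with hP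
  set A := leftHalfPlane (θ + α) (c (θ + α)) with hA
  set B := leftHalfPlane (θ + β) (c (θ + β)) with hB
  have mP : MeasurableSet P := measurableSet_leftHalfPlane _ _
  have mA : MeasurableSet A := measurableSet_leftHalfPlane _ _
  have mB : MeasurableSet B := measurableSet_leftHalfPlane _ _
  have split : ∀ S T : Set (EuclideanSpace ℝ (Fin 2)), MeasurableSet T →
      μ.real (S ∩ T) + μ.real (S \ T) = μ.real S := fun S T hT => measureReal_inter_add_sdiff hT
  have hAB : μ.real (A \ B) = μ.real (B \ A) := by
    have h1 := split A B mB
    have h2 := split B A mA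
    rw [Set.inter_comm] at h2
    linarith [hhalf (θ + α), hhalf (θ + β)]
  have e1 := split (P \ A) B mB
  have e2 := split (P \ B) A mA
  have e3 : (P \ A) \ B = (P \ B) \ A := by ext; simp; tauto
  rw [e3] at e1
  have openlt : ∀ θ' t, IsOpen {x | leftForm θ' x < t} := fun θ' t =>
    isOpen_lt (continuous_leftForm_right θ') continuous_const
  suffices μ.real ((P \ A) ∩ B) < μ.real ((P \ B) ∩ A) by linarith
  rcases le_total (Real.sin β * c (θ + α))
    (Real.sin (β - α) * c θ + Real.sin α * c (θ + β)) with hK | hK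
  · have hempty : (P \ A) ∩ B = ∅ := by
      rw [Set.eq_empty_iff_forall_notMem]
      rintro x ⟨⟨hx1, hx2⟩, hx3⟩
      simp only [hP, hA, hB, leftHalfPlane, Set.mem_ofPred_eq, not_lt] at hx1 hx2 hx3
      nlinarith [hrel x]
    rw [hempty, measureReal_empty]
    obtain ⟨x, hx1, hx2⟩ := exists_leftForm_eq sβ.ne' θ
      (c θ + (|Real.sin β * c (θ + α) - (Real.sin (β - α) * c θ + Real.sin α * c (θ + β))|
        + Real.sin α + 1) / Real.sin (β - α)) (c (θ + β) - 1)
    refine measureReal_pos_of_mem_isOpen (x := x)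
      (((isOpen_leftHalfPlane θ (c θ)).inter (openlt (θ + β) (c (θ + β)))).inter
        (isOpen_leftHalfPlane (θ + α) (c (θ + α)))) ⟨⟨?_, ?_⟩, ?_⟩
      (fun y hy => ⟨⟨hy.1.1, (show leftForm _ y < _ from hy.1.2).le.not_gt⟩, hy.2⟩)
    · change _ < leftForm θ x
      rw [hx1]
      exact lt_add_of_pos_right _ (by positivity)
    · change leftForm _ x < _
      linarith
    · change _ < leftForm _ x
      refine lt_of_mul_lt_mul_left (a := Real.sin β) ?_ sβ.le
      rw [hrel x, hx1, hx2, mul_add, mul_div_cancel₀ _ sd.ne']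
      linarith [le_abs_self (Real.sin β * c (θ + α) -
        (Real.sin (β - α) * c θ + Real.sin α * c (θ + β)))]
  · have hsub : A \ B ⊆ (P \ B) ∩ A := by
      rintro x ⟨hx1, hx2⟩
      refine ⟨⟨?_, hx2⟩, hx1⟩
      simp only [hP, hA, hB, leftHalfPlane, Set.mem_ofPred_eq, not_lt] at hx1 hx2 ⊢
      by_contra! h
      nlinarith [hrel x]
    have e4 := split (B \ A) P mP
    have e5 : (B \ A) ∩ P = (P \ A) ∩ B := by ext; simp; tauto
    rw [e5] at e4
    have hpos : 0 < μ.real ((B \ A) \ P) := by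
      obtain ⟨x, hx1, hx2⟩ := exists_leftForm_eq sβ.ne' θ
        (c θ - (|Real.sin β * c (θ + α) - (Real.sin (β - α) * c θ + Real.sin α * c (θ + β))|
          + Real.sin α + 1) / Real.sin (β - α)) (c (θ + β) + 1)
      refine measureReal_pos_of_mem_isOpen (x := x)
        (((isOpen_leftHalfPlane (θ + β) (c (θ + β))).inter (openlt (θ + α) (c (θ + α)))).inter
          (openlt θ (c θ))) ⟨⟨?_, ?_⟩, ?_⟩
        (fun y hy => ⟨⟨hy.1.1, (show leftForm _ y < _ from hy.1.2).le.not_gt⟩,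
          (show leftForm _ y < _ from hy.2).le.not_gt⟩)
      · change _ < leftForm _ x
        linarith
      · change leftForm _ x < _
        refine lt_of_mul_lt_mul_left (a := Real.sin β) ?_ sβ.le
        rw [hrel x, hx1, hx2, mul_sub, mul_div_cancel₀ _ sd.ne']
        linarith [neg_abs_le (Real.sin β * c (θ + α) -
          (Real.sin (β - α) * c θ + Real.sin α * c (θ + β)))]
      · change leftForm θ x < _
        rw [hx1]
        exact sub_lt_self _ (by positivity)
    linarith [measureReal_mono (μ := μ) hsub]

/-- Three concurrent halving lines, the first two and the last two of which bound double wedges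
of one third of the total mass. -/
theorem exists_concurrent_halving (hline : ∀ θ c, μ {x | leftForm θ x = c} = 0) :
    ∃ (r : EuclideanSpace ℝ (Fin 2)) (θ α β : ℝ), 0 < α ∧ α < β ∧ β < Real.pi ∧
      (∀ φ ∈ ({θ, θ + α, θ + β} : Set ℝ),
        μ.real (leftHalfPlane φ (leftForm φ r)) = μ.real Set.univ / 2) ∧
      μ.real (leftHalfPlane θ (leftForm θ r) \ leftHalfPlane (θ + α) (leftForm (θ + α) r)) =
        μ.real Set.univ / 6 ∧
      μ.real (leftHalfPlane θ (leftForm θ r) \ leftHalfPlane (θ + β) (leftForm (θ + β) r)) =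
        μ.real Set.univ / 3 := by
  obtain ⟨c, hc, hhalf, hcπ⟩ := exists_continuous_halving hline
  have hpos : 0 < μ.real Set.univ :=
    measureReal_pos_of_mem_isOpen isOpen_univ (Set.mem_univ 0) subset_rfl
  set M := μ.real Set.univ
  set L : ℝ → Set (EuclideanSpace ℝ (Fin 2)) := fun θ => leftHalfPlane θ (c θ) with hL
  have mL : ∀ θ, MeasurableSet (L θ) := fun θ => measurableSet_leftHalfPlane _ _
  set v : ℝ → ℝ → ℝ := fun θ α => μ.real (L θ \ L (θ + α)) with hv
  have hvcont : Continuous fun q : ℝ × ℝ => v q.1 q.2 := by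
    refine continuous_measureReal (A := fun q : ℝ × ℝ => L q.1 \ L (q.1 + q.2))
      (fun _ => (mL _).diff (mL _)) fun q => ?_
    filter_upwards [ae_leftForm_ne hline q.1 (c q.1),
      ae_leftForm_ne hline (q.1 + q.2) (c (q.1 + q.2))] with x hx hx'
    have hform := continuous_leftForm_left x
    have h1 := eventually_lt_iff_of_ne (p := q) (u := fun p : ℝ × ℝ => c p.1)
      (v := fun p : ℝ × ℝ => leftForm p.1 x) (hc.comp continuous_fst).continuousAt
      (hform.comp continuous_fst).continuousAt hx
    have h2 := eventually_lt_iff_of_ne (p := q) (u := fun p : ℝ × ℝ => c (p.1 + p.2))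
      (v := fun p : ℝ × ℝ => leftForm (p.1 + p.2) x) (hc.comp continuous_add).continuousAt
      (hform.comp continuous_add).continuousAt hx'
    filter_upwards [h1, h2] with p hp1 hp2
    exact and_congr hp1 (not_congr hp2)
  have haeπ : ∀ θ, L (θ + Real.pi) =ᵐ[μ] ((L θ)ᶜ : Set (EuclideanSpace ℝ (Fin 2))) := by
    intro θ
    simp only [hL, hcπ]
    exact leftHalfPlane_add_pi_ae_eq_compl hline θ (c θ)
  have hv0 : ∀ θ, v θ 0 = 0 := by simp [hv]
  have hvπ : ∀ θ, v θ Real.pi = M / 2 := by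
    intro θ
    have h : μ.real (L θ \ L (θ + Real.pi)) = μ.real (L θ \ (L θ)ᶜ) :=
      measureReal_congr (ae_eq_set_sdiff (ae_eq_refl (L θ)) (haeπ θ))
    simp only [hv]
    rw [h, Set.sdiff_compl, Set.inter_self]
    exact hhalf θ
  have hmono : ∀ θ, StrictMonoOn (v θ) (Set.Ioo 0 Real.pi) := fun θ a ha b hb hab =>
    measureReal_wedge_lt c hhalf ha.1 hab hb.2
  have hvper : ∀ θ a, v (θ + Real.pi) a = v θ a := by
    intro θ a
    have h1 : μ.real (L (θ + Real.pi) \ L (θ + a + Real.pi)) = μ.real ((L θ)ᶜ \ (L (θ + a))ᶜ) :=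
      measureReal_congr (ae_eq_set_sdiff (haeπ θ) (haeπ (θ + a)))
    have h2 : (L θ)ᶜ \ (L (θ + a))ᶜ = L (θ + a) \ L θ := by ext; simp; tauto
    simp only [hv]
    rw [add_right_comm, h1, h2]
    have h3 := measureReal_inter_add_sdiff (μ := μ) (s := L (θ + a)) (mL θ)
    have h4 := measureReal_inter_add_sdiff (μ := μ) (s := L θ) (mL (θ + a))
    rw [Set.inter_comm] at h4
    linarith [hhalf θ, hhalf (θ + a)]
  have hsel : ∀ k, 0 < k → k < M / 2 → ∃ f : ℝ → ℝ, Continuous f ∧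
      (∀ θ, f θ ∈ Set.Ioo 0 Real.pi) ∧ ∀ θ, v θ (f θ) = k := by
    intro k hk0 hk
    refine exists_continuous_eq_of_strictMonoOn
      (fun a => hvcont.comp (Continuous.prodMk_left a)) isOpen_Ioo hmono fun θ => ?_
    have := intermediate_value_Ioo Real.pi_pos.le
      (hvcont.comp (Continuous.prodMk_right θ)).continuousOn (f := v θ)
    rw [hv0, hvπ] at this
    exact this ⟨hk0, hk⟩
  obtain ⟨f, hf, hfS, hfk⟩ := hsel (M / 6) (by linarith) (by linarith)
  obtain ⟨g, hg, hgS, hgk⟩ := hsel (M / 3) (by linarith) (by linarith)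
  have hfg : ∀ θ, f θ < g θ := fun θ => by
    rw [← (hmono θ).lt_iff_lt (hfS θ) (hgS θ), hfk, hgk]; linarith
  have hfper : ∀ θ, f (θ + Real.pi) = f θ := fun θ =>
    (hmono θ).injOn (hfS _) (hfS θ) (by rw [hfk, ← hvper, hfk])
  have hgper : ∀ θ, g (θ + Real.pi) = g θ := fun θ =>
    (hmono θ).injOn (hgS _) (hgS θ) (by rw [hgk, ← hvper, hgk])
  set G : ℝ → ℝ := fun θ => Real.sin (g θ) * c (θ + f θ) -
    (Real.sin (g θ - f θ) * c θ + Real.sin (f θ) * c (θ + g θ)) with hG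
  have hGcont : Continuous G := by fun_prop
  have hGπ : G (0 + Real.pi) = -G 0 := by
    simp only [hG, hfper, hgper, add_right_comm _ Real.pi, hcπ]; ring
  obtain ⟨θ, hθ⟩ : ∃ θ, G θ = 0 := by
    rcases le_total (G 0) 0 with h | h
    · exact mem_range_of_exists_le_of_exists_ge hGcont ⟨0, h⟩ ⟨0 + Real.pi, by linarith⟩
    · exact mem_range_of_exists_le_of_exists_ge hGcont ⟨0 + Real.pi, by linarith⟩ ⟨0, h⟩
  have sg : 0 < Real.sin (g θ) := Real.sin_pos_of_pos_of_lt_pi (hgS θ).1 (hgS θ).2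
  obtain ⟨r, hr1, hr2⟩ := exists_leftForm_eq sg.ne' θ (c θ) (c (θ + g θ))
  have hr3 : leftForm (θ + f θ) r = c (θ + f θ) := by
    refine mul_left_cancel₀ sg.ne' ?_
    rw [sin_mul_leftForm, hr1, hr2]
    simp only [hG] at hθ
    linarith
  refine ⟨r, θ, f θ, g θ, (hfS θ).1, hfg θ, (hgS θ).2, ?_, ?_, ?_⟩
  · rintro φ (rfl | rfl | rfl)
    · rw [hr1]; exact hhalf _
    · rw [hr3]; exact hhalf _
    · rw [hr2]; exact hhalf _
  · rw [hr1, hr3]; exact hfk θ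
  · rw [hr1, hr2]; exact hgk θ

theorem measureReal_eq_sum_of_mem_iff {F κ : Type*} [MeasurableSpace F] [Fintype κ] {ν : Measure F}
    [IsFiniteMeasure ν] {A : κ → Set F} (hA : ∀ j, MeasurableSet (A j))
    (hdisj : Pairwise (Function.onFun Disjoint A)) (hcover : ∀ᵐ x ∂ν, ∃ j, x ∈ A j)
    (S : Set F) (J : Finset κ) (hS : ∀ j, ∀ x ∈ A j, (x ∈ S ↔ j ∈ J)) :
    ν.real S = ∑ j ∈ J, ν.real (A j) := by
  rw [← measureReal_biUnion_finset (fun i _ j _ hij => hdisj hij) fun j _ => hA j]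
  refine measureReal_congr (eventuallyEq_set.2 ?_)
  filter_upwards [hcover] with x ⟨j, hj⟩
  simp only [Set.mem_iUnion, exists_prop]
  refine ⟨fun h => ⟨j, (hS j x hj).1 h, hj⟩, ?_⟩
  rintro ⟨i, hi, hxi⟩
  exact (hS i x hxi).2 hi

/-- Three linearly dependent functions cut a space into six sign classes, and these have equal mass
as soon as five unions of them have the expected mass. -/
theorem exists_six_sign_classes {F : Type*} [MeasurableSpace F] {ν : Measure F} [IsFiniteMeasure ν]
    {a b c : F → ℝ} (ha : Measurable a) (hb : Measurable b) (hc : Measurable c) {u v w : ℝ}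
    (hu : 0 < u) (hv : 0 < v) (hw : 0 < w) (hrel : ∀ x, u * b x = v * a x + w * c x)
    (hab : ν.real {x | 0 < a x ∧ ¬ 0 < b x} = ν.real Set.univ / 6)
    (hac : ν.real {x | 0 < a x ∧ ¬ 0 < c x} = ν.real Set.univ / 3)
    (ha2 : ν.real {x | 0 < a x} = ν.real Set.univ / 2)
    (hb2 : ν.real {x | 0 < b x} = ν.real Set.univ / 2)
    (hc2 : ν.real {x | 0 < c x} = ν.real Set.univ / 2)
    (hne : ∀ᵐ x ∂ν, a x ≠ 0 ∧ b x ≠ 0 ∧ c x ≠ 0) :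
    ∃ A : Fin 6 → Set F, (∀ j, MeasurableSet (A j)) ∧ Pairwise (Function.onFun Disjoint A) ∧
      (∀ j, ν.real (A j) = ν.real Set.univ / 6) ∧
      (∀ x ∈ A 0, 0 < a x ∧ b x < 0 ∧ c x < 0) ∧ (∀ x ∈ A 1, 0 < a x ∧ 0 < b x ∧ c x < 0) ∧
      (∀ x ∈ A 2, 0 < a x ∧ 0 < b x ∧ 0 < c x) ∧ (∀ x ∈ A 3, a x < 0 ∧ 0 < b x ∧ 0 < c x) ∧
      (∀ x ∈ A 4, a x < 0 ∧ b x < 0 ∧ 0 < c x) ∧ ∀ x ∈ A 5, a x < 0 ∧ b x < 0 ∧ c x < 0 := by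
  have pos : ∀ {f : F → ℝ}, Measurable f → MeasurableSet {x | 0 < f x} := fun hf =>
    measurableSet_lt measurable_const hf
  have neg : ∀ {f : F → ℝ}, Measurable f → MeasurableSet {x | f x < 0} := fun hf =>
    measurableSet_lt hf measurable_const
  let A : Fin 6 → Set F :=
    ![{x | 0 < a x ∧ b x < 0 ∧ c x < 0}, {x | 0 < a x ∧ 0 < b x ∧ c x < 0},
      {x | 0 < a x ∧ 0 < b x ∧ 0 < c x}, {x | a x < 0 ∧ 0 < b x ∧ 0 < c x},
      {x | a x < 0 ∧ b x < 0 ∧ 0 < c x}, {x | a x < 0 ∧ b x < 0 ∧ c x < 0}]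
  have mA : ∀ j, MeasurableSet (A j) := by
    intro j
    fin_cases j
    exacts [(pos ha).inter ((neg hb).inter (neg hc)), (pos ha).inter ((pos hb).inter (neg hc)),
      (pos ha).inter ((pos hb).inter (pos hc)), (neg ha).inter ((pos hb).inter (pos hc)),
      (neg ha).inter ((neg hb).inter (pos hc)), (neg ha).inter ((neg hb).inter (neg hc))]
  let code : F → Bool × Bool × Bool := fun x =>
    (decide (0 < a x), decide (0 < b x), decide (0 < c x))
  let s : Fin 6 → Bool × Bool × Bool :=
    ![(true, false, false), (true, true, false), (true, true, true), (false, true, true),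
      (false, false, true), (false, false, false)]
  have hs : Function.Injective s := by decide
  have hcode : ∀ j, ∀ x ∈ A j, code x = s j := by
    intro j x
    fin_cases j <;> rintro ⟨h1, h2, h3⟩ <;> simp [code, s, h1, h2, h3, not_lt, le_of_lt]
  have hdisj : Pairwise (Function.onFun Disjoint A) := fun i j hij =>
    Set.disjoint_left.2 fun x hi hj => hij (hs ((hcode i x hi).symm.trans (hcode j x hj)))
  have hcover : ∀ᵐ x ∂ν, ∃ j, x ∈ A j := by
    filter_upwards [hne] with x ⟨hxa, hxb, hxc⟩
    rcases hxa.lt_or_gt with ea | ea <;> rcases hxb.lt_or_gt with eb | eb <;>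
      rcases hxc.lt_or_gt with ec | ec
    · exact ⟨5, ea, eb, ec⟩
    · exact ⟨4, ea, eb, ec⟩
    · nlinarith [hrel x]
    · exact ⟨3, ea, eb, ec⟩
    · exact ⟨0, ea, eb, ec⟩
    · nlinarith [hrel x]
    · exact ⟨1, ea, eb, ec⟩
    · exact ⟨2, ea, eb, ec⟩
  have hsum : ∀ (S : Set F) (f : Bool × Bool × Bool → Bool) (J : Finset (Fin 6)),
      (∀ x, x ∈ S ↔ f (code x) = true) → (∀ j, f (s j) = true ↔ j ∈ J) →
      ν.real S = ∑ j ∈ J, ν.real (A j) := fun S f J hS hJ =>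
    measureReal_eq_sum_of_mem_iff mA hdisj hcover S J fun j x hx => by
      rw [hS, hcode j x hx, hJ]
  have e1 := hsum _ (fun z => z.1 && !z.2.1) {0} (fun x => by simp [code]) (by decide)
    |>.symm.trans hab
  have e2 := hsum _ (fun z => z.1 && !z.2.2) {0, 1} (fun x => by simp [code]) (by decide)
    |>.symm.trans hac
  have e3 := hsum _ (fun z => z.1) {0, 1, 2} (fun x => by simp [code]) (by decide)
    |>.symm.trans ha2
  have e4 := hsum _ (fun z => z.2.1) {1, 2, 3} (fun x => by simp [code]) (by decide)
    |>.symm.trans hb2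
  have e5 := hsum _ (fun z => z.2.2) {2, 3, 4} (fun x => by simp [code]) (by decide)
    |>.symm.trans hc2
  have e6 := hsum Set.univ (fun _ => true) Finset.univ (by simp) (by simp)
  rw [Finset.sum_singleton] at e1
  rw [Finset.sum_pair (by decide)] at e2
  rw [Finset.sum_insert (by decide), Finset.sum_pair (by decide)] at e3 e4 e5
  rw [Fin.sum_univ_six] at e6
  refine ⟨A, mA, hdisj, fun j => ?_, fun _ h => h, fun _ h => h, fun _ h => h, fun _ h => h,
    fun _ h => h, fun _ h => h⟩
  fin_cases j <;> simp only [Fin.zero_eta, Fin.mk_one, Fin.reduceFinMk] <;> linarith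

/-- The orientation of the triangle `r`, `y`, `z`. -/
def orientation (r y z : EuclideanSpace ℝ (Fin 2)) : ℝ :=
  (y 0 - r 0) * (z 1 - r 1) - (y 1 - r 1) * (z 0 - r 0)

theorem leftForm_mul_sub_leftForm_mul (θ φ : ℝ) (r y z : EuclideanSpace ℝ (Fin 2)) :
    (leftForm θ y - leftForm θ r) * (leftForm φ z - leftForm φ r) -
      (leftForm φ y - leftForm φ r) * (leftForm θ z - leftForm θ r) =
    Real.sin (φ - θ) * orientation r y z := by
  simp only [leftForm, orientation, Real.sin_sub]
  ring

/-- Three concurrent lines cut the plane into six sectors of equal mass. -/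
theorem exists_six_sectors (hline : ∀ θ c, μ {x | leftForm θ x = c} = 0) :
    ∃ (r : EuclideanSpace ℝ (Fin 2)) (A : Fin 6 → Set (EuclideanSpace ℝ (Fin 2))),
      (∀ j, MeasurableSet (A j)) ∧ Pairwise (Function.onFun Disjoint A) ∧
      (∀ j, μ.real (A j) = μ.real Set.univ / 6) ∧
      ∀ j, ∀ y ∈ A j, ∀ z, z ∈ A (j + 1) ∨ z ∈ A (j + 2) → 0 < orientation r y z := by
  obtain ⟨r, θ, α, β, hα, hαβ, hβ, hhalf, hsixth, hthird⟩ := exists_concurrent_halving hline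
  have sα : 0 < Real.sin α := Real.sin_pos_of_pos_of_lt_pi hα (hαβ.trans hβ)
  have sβ : 0 < Real.sin β := Real.sin_pos_of_pos_of_lt_pi (hα.trans hαβ) hβ
  have sd : 0 < Real.sin (β - α) := Real.sin_pos_of_pos_of_lt_pi (by linarith) (by linarith)
  have hform : ∀ φ, ∃ f : EuclideanSpace ℝ (Fin 2) → ℝ, f = fun x => leftForm φ x - leftForm φ r :=
    fun φ => ⟨_, rfl⟩
  obtain ⟨a, ha⟩ := hform θ
  obtain ⟨b, hb⟩ := hform (θ + α)
  obtain ⟨c, hc⟩ := hform (θ + β)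
  have hmeas : ∀ φ, Measurable fun x => leftForm φ x - leftForm φ r := fun φ =>
    ((continuous_leftForm_right φ).sub continuous_const).measurable
  have hrel : ∀ x, Real.sin β * b x = Real.sin (β - α) * a x + Real.sin α * c x := by
    intro x
    have h1 := sin_mul_leftForm θ α β x
    have h2 := sin_mul_leftForm θ α β r
    simp only [ha, hb, hc]
    linear_combination h1 - h2
  have hset : ∀ φ, {x | 0 < leftForm φ x - leftForm φ r} = leftHalfPlane φ (leftForm φ r) :=
    fun φ => Set.ext fun x => sub_pos (a := leftForm φ x) (b := leftForm φ r)
  have seta : {x | 0 < a x} = leftHalfPlane θ (leftForm θ r) := ha ▸ hset θ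
  have setb : {x | 0 < b x} = leftHalfPlane (θ + α) (leftForm (θ + α) r) := hb ▸ hset (θ + α)
  have setc : {x | 0 < c x} = leftHalfPlane (θ + β) (leftForm (θ + β) r) := hc ▸ hset (θ + β)
  rw [← seta, ← setb] at hsixth
  rw [← seta, ← setc] at hthird
  have hne : ∀ᵐ x ∂μ, a x ≠ 0 ∧ b x ≠ 0 ∧ c x ≠ 0 := by
    filter_upwards [ae_leftForm_ne hline θ (leftForm θ r),
      ae_leftForm_ne hline (θ + α) (leftForm (θ + α) r),
      ae_leftForm_ne hline (θ + β) (leftForm (θ + β) r)] with x hxa hxb hxc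
    simp only [ha, hb, hc]
    exact ⟨sub_ne_zero.2 hxa, sub_ne_zero.2 hxb, sub_ne_zero.2 hxc⟩
  have hab : ∀ y z, a y * b z - b y * a z = Real.sin α * orientation r y z := fun y z => by
    simpa [ha, hb] using leftForm_mul_sub_leftForm_mul θ (θ + α) r y z
  have hac : ∀ y z, a y * c z - c y * a z = Real.sin β * orientation r y z := fun y z => by
    simpa [ha, hc] using leftForm_mul_sub_leftForm_mul θ (θ + β) r y z
  have hbc : ∀ y z, b y * c z - c y * b z = Real.sin (β - α) * orientation r y z := fun y z => by
    simpa [hb, hc] using leftForm_mul_sub_leftForm_mul (θ + α) (θ + β) r y z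
  obtain ⟨A, mA, hdisj, hmass, h0, h1, h2, h3, h4, h5⟩ :=
    exists_six_sign_classes (ha ▸ hmeas θ) (hb ▸ hmeas (θ + α)) (hc ▸ hmeas (θ + β)) sβ sd sα hrel
      hsixth hthird (seta ▸ hhalf θ (by simp)) (setb ▸ hhalf (θ + α) (by simp))
      (setc ▸ hhalf (θ + β) (by simp)) hne
  refine ⟨r, A, mA, hdisj, hmass, ?_⟩
  have hor : ∀ {s f g f' g' κ : ℝ}, 0 < s → f * g' - g * f' = s * κ → 0 < f * g' → g * f' < 0 →
      0 < κ := fun hs h hp hn => pos_of_mul_pos_right (by linarith) hs.le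
  have pp : ∀ {s t : ℝ}, 0 < s → 0 < t → 0 < s * t := mul_pos
  have nn : ∀ {s t : ℝ}, s < 0 → t < 0 → 0 < s * t := mul_pos_of_neg_of_neg
  have pn : ∀ {s t : ℝ}, 0 < s → t < 0 → s * t < 0 := mul_neg_of_pos_of_neg
  have np : ∀ {s t : ℝ}, s < 0 → 0 < t → s * t < 0 := mul_neg_of_neg_of_pos
  intro j y hy z hz
  fin_cases j
  · obtain ⟨ya, yb, yc⟩ := h0 y hy
    rcases hz with hz | hz
    · obtain ⟨za, zb, zc⟩ := h1 z hz
      exact hor sα (hab y z) (pp ya zb) (np yb za)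
    · obtain ⟨za, zb, zc⟩ := h2 z hz
      exact hor sα (hab y z) (pp ya zb) (np yb za)
  · obtain ⟨ya, yb, yc⟩ := h1 y hy
    rcases hz with hz | hz
    · obtain ⟨za, zb, zc⟩ := h2 z hz
      exact hor sβ (hac y z) (pp ya zc) (np yc za)
    · obtain ⟨za, zb, zc⟩ := h3 z hz
      exact hor sα (hab y z) (pp ya zb) (pn yb za)
  · obtain ⟨ya, yb, yc⟩ := h2 y hy
    rcases hz with hz | hz
    · obtain ⟨za, zb, zc⟩ := h3 z hz
      exact hor sα (hab y z) (pp ya zb) (pn yb za)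
    · obtain ⟨za, zb, zc⟩ := h4 z hz
      exact hor sd (hbc y z) (pp yb zc) (pn yc zb)
  · obtain ⟨ya, yb, yc⟩ := h3 y hy
    rcases hz with hz | hz
    · obtain ⟨za, zb, zc⟩ := h4 z hz
      exact hor sd (hbc y z) (pp yb zc) (pn yc zb)
    · obtain ⟨za, zb, zc⟩ := h5 z hz
      exact hor sβ (hac y z) (nn ya zc) (pn yc za)
  · obtain ⟨ya, yb, yc⟩ := h4 y hy
    rcases hz with hz | hz
    · obtain ⟨za, zb, zc⟩ := h5 z hz
      exact hor sβ (hac y z) (nn ya zc) (pn yc za)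
    · obtain ⟨za, zb, zc⟩ := h0 z hz
      exact hor sα (hab y z) (nn ya zb) (np yb za)
  · obtain ⟨ya, yb, yc⟩ := h5 y hy
    rcases hz with hz | hz
    · obtain ⟨za, zb, zc⟩ := h0 z hz
      exact hor sα (hab y z) (nn ya zb) (np yb za)
    · obtain ⟨za, zb, zc⟩ := h1 z hz
      exact hor sβ (hac y z) (nn ya zc) (np yc za)

end Partition

theorem orientation_swap (r y z : EuclideanSpace ℝ (Fin 2)) :
    orientation r z y = -orientation r y z := by
  simp only [orientation]; ring

theorem mem_convexHull_of_orientation {r y₁ y₂ y₃ : EuclideanSpace ℝ (Fin 2)}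
    (h₁₂ : 0 < orientation r y₁ y₂) (h₂₃ : 0 < orientation r y₂ y₃)
    (h₃₁ : 0 ≤ orientation r y₃ y₁) : r ∈ convexHull ℝ {y₁, y₂, y₃} := by
  have hs : 0 < orientation r y₂ y₃ + orientation r y₃ y₁ + orientation r y₁ y₂ := by linarith
  set s := orientation r y₂ y₃ + orientation r y₃ y₁ + orientation r y₁ y₂ with hsdef
  have hsub : ({y₁, y₂, y₃} : Set (EuclideanSpace ℝ (Fin 2))) ⊆ convexHull ℝ {y₁, y₂, y₃} :=
    subset_convexHull ℝ _
  have hmem := (convex_convexHull ℝ {y₁, y₂, y₃}).sum_mem (t := Finset.univ) (z := ![y₁, y₂, y₃])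
    (w := ![orientation r y₂ y₃ / s, orientation r y₃ y₁ / s, orientation r y₁ y₂ / s])
    (by simp only [Finset.mem_univ, forall_const, Fin.forall_fin_succ]
        refine ⟨?_, ?_, ?_, by simp⟩ <;> simp <;> positivity)
    (by simp only [Fin.sum_univ_three, Matrix.cons_val]; field_simp; rfl)
    (by simp only [Finset.mem_univ, forall_const, Fin.forall_fin_succ]
        exact ⟨hsub (by simp), hsub (by simp), hsub (by simp), by simp⟩)
  convert hmem
  simp only [Fin.sum_univ_three, Matrix.cons_val]
  ext i
  fin_cases i <;>
  · simp only [PiLp.add_apply, PiLp.smul_apply, smul_eq_mul, Fin.zero_eta, Fin.mk_one]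
    field_simp
    simp only [hsdef, orientation]
    ring

theorem convexHull_triple_subset_cthickening {E : Type*} [SeminormedAddCommGroup E]
    [NormedSpace ℝ E] {x₁ x₂ x₃ y₁ y₂ y₃ : E} {δ : ℝ} (h₁ : dist y₁ x₁ ≤ δ) (h₂ : dist y₂ x₂ ≤ δ)
    (h₃ : dist y₃ x₃ ≤ δ) :
    convexHull ℝ {y₁, y₂, y₃} ⊆ Metric.cthickening δ (convexHull ℝ {x₁, x₂, x₃}) := by
  refine convexHull_min ?_ ((convex_convexHull ℝ _).cthickening δ)
  have hx : ({x₁, x₂, x₃} : Set E) ⊆ convexHull ℝ {x₁, x₂, x₃} := subset_convexHull ℝ _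
  rintro y (rfl | rfl | rfl)
  exacts [Metric.mem_cthickening_of_dist_le _ _ _ _ (hx (by simp)) h₁,
    Metric.mem_cthickening_of_dist_le _ _ _ _ (hx (by simp)) h₂,
    Metric.mem_cthickening_of_dist_le _ _ _ _ (hx (by simp)) h₃]

theorem volume_leftForm_eq (θ c : ℝ) :
    volume {x : EuclideanSpace ℝ (Fin 2) | leftForm θ x = c} = 0 := by
  have hker : volume {x : EuclideanSpace ℝ (Fin 2) | leftForm θ x = 0} = 0 := by
    let K : Submodule ℝ (EuclideanSpace ℝ (Fin 2)) :=
      { carrier := {x | leftForm θ x = 0}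
        add_mem' := fun {x y} hx hy => by
          change leftForm θ (x + y) = 0
          rw [leftForm_add, show leftForm θ x = 0 from hx, show leftForm θ y = 0 from hy, add_zero]
        zero_mem' := by simp [leftForm]
        smul_mem' := fun s x hx => by
          change leftForm θ (s • x) = 0
          rw [leftForm_smul, show leftForm θ x = 0 from hx, mul_zero] }
    refine Measure.addHaar_submodule volume K fun htop => ?_
    have hmem : (!₂[-Real.sin θ, Real.cos θ] : EuclideanSpace ℝ (Fin 2)) ∈ K := htop ▸ trivial
    have h : leftForm θ !₂[-Real.sin θ, Real.cos θ] = 0 := hmem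
    simp only [leftForm, Matrix.cons_val_one, Matrix.cons_val_zero] at h
    nlinarith [Real.sin_sq_add_cos_sq θ]
  obtain ⟨v, hv, -⟩ := exists_leftForm_eq (β := Real.pi / 2) (by simp) θ c 0
  rw [← hker, ← measure_preimage_add_right volume v {x | leftForm θ x = c}]
  congr 1
  ext x
  simp [leftForm_add, hv]

/-- Probability measures concentrated near the origin that charge every open set and no line. -/
theorem exists_concentrated_measure {δ η : ℝ} (hδ : 0 < δ) (hη : 0 < η) :
    ∃ ν : Measure (EuclideanSpace ℝ (Fin 2)), IsProbabilityMeasure ν ∧ volume ≪ ν ∧ ν ≪ volume ∧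
      1 - η ≤ ν.real (Metric.closedBall 0 δ) := by
  let ν₀ : Measure (EuclideanSpace ℝ (Fin 2)) := (volume : Measure _).toFinite
  obtain ⟨k, hk⟩ : ∃ k : ℕ, 1 - η ≤ ν₀.real (Metric.closedBall 0 (k + 1)) := by
    have hmono : Monotone fun k : ℕ =>
        Metric.closedBall (0 : EuclideanSpace ℝ (Fin 2)) ((k : ℝ) + 1) := fun i j hij =>
      Metric.closedBall_subset_closedBall (by gcongr)
    have hunion : ⋃ k : ℕ, Metric.closedBall (0 : EuclideanSpace ℝ (Fin 2)) ((k : ℝ) + 1) =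
        Set.univ := Set.eq_univ_of_forall fun z => by
      obtain ⟨k, hk⟩ := exists_nat_ge ‖z‖
      exact Set.mem_iUnion.2 ⟨k, by rw [mem_closedBall_zero_iff]; linarith⟩
    have ht := (ENNReal.tendsto_toReal (measure_ne_top ν₀ _)).comp
      (tendsto_measure_iUnion_atTop (μ := ν₀) hmono)
    rw [hunion, measure_univ, ENNReal.toReal_one] at ht
    exact ((ht.eventually_const_lt (sub_lt_self 1 hη)).exists).imp fun k hk => hk.le
  let σ : ℝ := δ / (k + 1)
  have hσ : 0 < σ := by positivity
  have hm : Measurable fun z : EuclideanSpace ℝ (Fin 2) => σ • z := measurable_const_smul σ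
  have hvol : (volume : Measure (EuclideanSpace ℝ (Fin 2))).map (fun z => σ • z) =
      ENNReal.ofReal |(σ ^ Module.finrank ℝ (EuclideanSpace ℝ (Fin 2)))⁻¹| • volume :=
    Measure.map_addHaar_smul volume hσ.ne'
  refine ⟨ν₀.map fun z => σ • z, Measure.isProbabilityMeasure_map hm.aemeasurable, ?_, ?_, ?_⟩
  · refine Measure.AbsolutelyContinuous.trans ?_ ((absolutelyContinuous_toFinite _).map hm)
    rw [hvol]
    refine Measure.absolutelyContinuous_smul ?_
    simp [hσ.ne']
  · refine ((toFinite_absolutelyContinuous _).map hm).trans ?_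
    rw [hvol]
    exact Measure.smul_absolutelyContinuous
  · rw [map_measureReal_apply hm Metric.isClosed_closedBall.measurableSet]
    refine hk.trans_eq ?_
    congr 1
    ext z
    simp only [Set.mem_preimage, mem_closedBall_zero_iff, norm_smul, Real.norm_of_nonneg hσ.le, σ]
    rw [div_mul_eq_mul_div, div_le_iff₀ (by positivity), mul_le_mul_iff_right₀ hδ]

open Classical in
/-- If a representative of the point `k` lies in the sector `j` whenever `p k j` is positive, then
many triangles contain the centre of the sectors up to an error `δ`. -/
theorem sum_triangles_ge {ι : Type*} [Fintype ι] (x : ι → EuclideanSpace ℝ (Fin 2)) {δ m : ℝ}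
    (hm : 0 ≤ m) {r : EuclideanSpace ℝ (Fin 2)} {A : Fin 6 → Set (EuclideanSpace ℝ (Fin 2))}
    (hA : ∀ j, ∀ y ∈ A j, ∀ z, z ∈ A (j + 1) ∨ z ∈ A (j + 2) → 0 < orientation r y z)
    (p : ι → Fin 6 → ℝ) (hp : ∀ k j, 0 ≤ p k j) (hrow : ∀ k, ∑ j, p k j ≤ 1)
    (hcol : ∀ j, m ≤ ∑ k, p k j) (hpos : ∀ k j, 0 < p k j → ∃ y ∈ A j, dist y (x k) ≤ δ) :
    48 * m ^ 3 ≤ ∑ a, ∑ b, ∑ c,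
      if r ∈ Metric.cthickening δ (convexHull ℝ {x a, x b, x c}) then (1 : ℝ) else 0 := by
  choose! y hyA hyd using hpos
  have hin : ∀ a b c i j l, 0 < p a i → 0 < p b j → 0 < p c l → 0 < orientation r (y a i) (y b j) →
      0 < orientation r (y b j) (y c l) → 0 ≤ orientation r (y c l) (y a i) →
      r ∈ Metric.cthickening δ (convexHull ℝ {x a, x b, x c}) :=
    fun a b c i j l ha hb hc h1 h2 h3 =>
    convexHull_triple_subset_cthickening (hyd a i ha) (hyd b j hb) (hyd c l hc)
      (mem_convexHull_of_orientation h1 h2 h3)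
  have hrot : ∀ a b c, ({x a, x b, x c} : Set (EuclideanSpace ℝ (Fin 2))) = {x b, x c, x a} :=
    fun a b c => by rw [Set.insert_comm, Set.pair_comm (x a)]
  have hone : ∀ {P : Prop}, P → (1 : ℝ) ≤ if P then 1 else 0 := fun h => (if_pos h).ge
  refine sum_ge_of_six_classes p _ m hm hp hrow hcol (fun a b c => by split_ifs <;> simp)
    (fun a b c => by rw [Set.insert_comm]) (fun a b c => by rw [hrot]) ?_ ?_
  · intro i a b c ha hb hc
    refine hone (hin a b c _ _ _ ha hb hc (hA _ _ (hyA a i ha) _ (.inr (hyA b _ hb)))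
      (hA _ _ (hyA b _ hb) _ (.inr ?_)) (hA _ _ (hyA c _ hc) _ (.inr ?_)).le)
    · convert hyA c _ hc using 2
      rw [add_assoc]; rfl
    · convert hyA a i ha using 2
      rw [add_assoc]; exact add_zero i
  · intro i a b ha hb
    rcases le_total (orientation r (y a i) (y b (i + 3))) 0 with h | h
    · have h' : 0 ≤ orientation r (y b (i + 3)) (y a i) := by rw [orientation_swap]; linarith
      refine .inl fun c => ⟨fun hc => hone ?_, fun hc => hone ?_⟩ <;> rw [Set.pair_comm]
      · refine hin a c b _ _ _ ha hc hb (hA _ _ (hyA a i ha) _ (.inl (hyA c _ hc)))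
          (hA _ _ (hyA c _ hc) _ (.inr ?_)) h'
        convert hyA b _ hb using 2
        rw [add_assoc]; rfl
      · refine hin a c b _ _ _ ha hc hb (hA _ _ (hyA a i ha) _ (.inr (hyA c _ hc)))
          (hA _ _ (hyA c _ hc) _ (.inl ?_)) h'
        convert hyA b _ hb using 2
        rw [add_assoc]; rfl
    · refine .inr fun c => ⟨fun hc => hone ?_, fun hc => hone ?_⟩ <;> rw [hrot]
      · refine hin b c a _ _ _ hb hc ha (hA _ _ (hyA b _ hb) _ (.inl ?_))
          (hA _ _ (hyA c _ hc) _ (.inr ?_)) h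
        · convert hyA c _ hc using 2
          rw [add_assoc]; rfl
        · convert hyA a i ha using 2
          rw [add_assoc]; exact add_zero i
      · refine hin b c a _ _ _ hb hc ha (hA _ _ (hyA b _ hb) _ (.inr ?_))
          (hA _ _ (hyA c _ hc) _ (.inl ?_)) h
        · convert hyA c _ hc using 2
          rw [add_assoc]; rfl
        · convert hyA a i ha using 2
          rw [add_assoc]; exact add_zero i

open Classical in
theorem exists_sum_triangles_ge {ι : Type*} [Fintype ι] [Nonempty ι]
    (x : ι → EuclideanSpace ℝ (Fin 2)) {δ η : ℝ} (hδ : 0 < δ) (hη : 0 < η) (hη' : η ≤ 1 / 6) :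
    ∃ r, 48 * (Fintype.card ι * (1 / 6 - η)) ^ 3 ≤ ∑ a, ∑ b, ∑ c,
      if r ∈ Metric.cthickening δ (convexHull ℝ {x a, x b, x c}) then (1 : ℝ) else 0 := by
  obtain ⟨ν, hν, hvol, hνvol, hball⟩ := exists_concentrated_measure hδ hη
  let ν' : ι → Measure (EuclideanSpace ℝ (Fin 2)) := fun k => ν.map (x k + ·)
  have hmeas : ∀ k, Measurable (x k + ·) := fun k => measurable_const_add (x k)
  have hprob : ∀ k, IsProbabilityMeasure (ν' k) := fun k =>
    Measure.isProbabilityMeasure_map (hmeas k).aemeasurable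
  have hac : ∀ k, ν' k ≪ volume := fun k => by
    simpa only [map_add_left_eq_self] using hνvol.map (hmeas k)
  have hac' : ∀ k, volume ≪ ν' k := fun k => by
    simpa only [map_add_left_eq_self] using hvol.map (hmeas k)
  let μ : Measure (EuclideanSpace ℝ (Fin 2)) := ∑ k, ν' k
  have hμ : ∀ s, μ s = ∑ k, ν' k s := fun s => Measure.finsetSum_apply _ _ s
  have hμreal : ∀ s, μ.real s = ∑ k, (ν' k).real s := fun s => by
    rw [measureReal_def, hμ, ENNReal.toReal_sum fun k _ => measure_ne_top _ _]
    rfl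
  have hopen : μ.IsOpenPosMeasure := by
    refine Measure.AbsolutelyContinuous.isOpenPosMeasure (μ := volume) fun s hs => ?_
    obtain ⟨k⟩ := ‹Nonempty ι›
    rw [hμ, Finset.sum_eq_zero_iff] at hs
    exact hac' k (hs k (Finset.mem_univ k))
  have hline : ∀ θ c, μ {x | leftForm θ x = c} = 0 := fun θ c => by
    rw [hμ]
    exact Finset.sum_eq_zero fun k _ => hac k (volume_leftForm_eq θ c)
  obtain ⟨r, A, mA, hdisj, hmass, hA⟩ := exists_six_sectors hline
  refine ⟨r, sum_triangles_ge x (mul_nonneg (Nat.cast_nonneg _) (sub_nonneg.2 hη')) hA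
    (fun k j => (ν' k).real (A j ∩ Metric.closedBall (x k) δ)) (fun k j => measureReal_nonneg)
    ?_ ?_ ?_⟩
  · intro k
    rw [← measureReal_iUnion_fintype (fun i j hij =>
        (hdisj hij).mono Set.inter_subset_left Set.inter_subset_left)
      fun j => (mA j).inter Metric.isClosed_closedBall.measurableSet]
    exact measureReal_le_one
  · intro j
    have huniv : μ.real Set.univ = Fintype.card ι := by simp [hμreal]
    have hj := hmass j
    rw [huniv, hμreal] at hj
    have hk : ∀ k, (ν' k).real (A j) - η ≤ (ν' k).real (A j ∩ Metric.closedBall (x k) δ) := by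
      intro k
      have h1 : 1 - η ≤ (ν' k).real (Metric.closedBall (x k) δ) := by
        rw [map_measureReal_apply (hmeas k) Metric.isClosed_closedBall.measurableSet]
        refine hball.trans_eq ?_
        congr 1
        ext z
        simp
      have h2 := measureReal_inter_add_sdiff (μ := ν' k) (s := A j) (t := Metric.closedBall (x k) δ)
        Metric.isClosed_closedBall.measurableSet
      have h3 : (ν' k).real (A j \ Metric.closedBall (x k) δ) ≤
          (ν' k).real (Metric.closedBall (x k) δ)ᶜ := measureReal_mono fun z hz => hz.2
      rw [probReal_compl_eq_one_sub Metric.isClosed_closedBall.measurableSet] at h3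
      linarith
    have hsum := Finset.sum_le_sum fun k (_ : k ∈ Finset.univ) => hk k
    rw [Finset.sum_sub_distrib, hj, Finset.sum_const, Finset.card_univ, nsmul_eq_mul] at hsum
    linarith
  · intro k j hpos
    obtain ⟨y, hy⟩ := nonempty_of_measureReal_ne_zero hpos.ne'
    exact ⟨y, hy.1, hy.2⟩

open Classical in
theorem exists_le_card_filter_mem {E β : Type*} [MetricSpace E] [ProperSpace E]
    (S : Finset β) {K : β → Set E} (hK : ∀ t ∈ S, IsCompact (K t)) {N : ℝ} (hN : 0 < N)
    (h : ∀ δ : ℝ, 0 < δ → ∃ r, N ≤ (S.filter fun t => r ∈ Metric.cthickening δ (K t)).card) :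
    ∃ r, N ≤ (S.filter fun t => r ∈ K t).card := by
  have : Nonempty E := ⟨(h 1 one_pos).choose⟩
  choose! r hr using h
  let δ : ℕ → ℝ := fun m => 1 / ((m : ℝ) + 1)
  have hδ : ∀ m, 0 < δ m := fun m => Nat.one_div_pos_of_nat
  have hbdd : ∀ m, r (δ m) ∈ Metric.cthickening 1 (⋃ t ∈ S, K t) := by
    intro m
    have hcard : 0 < (S.filter fun t => r (δ m) ∈ Metric.cthickening (δ m) (K t)).card := by
      exact_mod_cast hN.trans_le (hr _ (hδ m))
    obtain ⟨t, ht⟩ := Finset.card_pos.1 hcard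
    rw [Finset.mem_filter] at ht
    refine Metric.cthickening_mono ?_ _ (Metric.cthickening_subset_of_subset _
      (Set.subset_biUnion_of_mem (u := K) ht.1) ht.2)
    exact (div_le_one (by positivity)).2 (by simp)
  obtain ⟨q, -, φ, hφ, hq⟩ := ((S.isCompact_biUnion hK).cthickening (r := 1)).tendsto_subseq hbdd
  have hlim : Tendsto (fun m => ENNReal.ofReal (δ (φ m))) atTop (𝓝 0) := by
    simpa [δ] using ENNReal.tendsto_ofReal
      ((tendsto_one_div_add_atTop_nhds_zero_nat (𝕜 := ℝ)).comp hφ.tendsto_atTop)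
  have hev : ∀ᶠ m in atTop, ∀ t ∈ S,
      r (δ (φ m)) ∈ Metric.cthickening (δ (φ m)) (K t) → q ∈ K t := by
    refine (S.eventually_all).2 fun t ht => ?_
    by_cases hqt : q ∈ K t
    · exact .of_forall fun _ _ => hqt
    have hpos : 0 < Metric.infEDist q (K t) :=
      pos_iff_ne_zero.2 fun h0 => hqt
        ((hK t ht).isClosed.closure_eq ▸ Metric.mem_closure_iff_infEDist_zero.2 h0)
    have hinf := ((Metric.continuous_infEDist (s := K t)).tendsto q).comp hq
    filter_upwards [hlim.eventually_lt hinf hpos] with m hm hmem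
    exact absurd hmem hm.not_ge
  obtain ⟨m, hm⟩ := hev.exists
  refine ⟨q, (hr _ (hδ (φ m))).trans (Nat.cast_le.2 (Finset.card_le_card fun t ht => ?_))⟩
  rw [Finset.mem_filter] at ht ⊢
  exact ⟨ht.1, hm t ht.1 ht.2⟩

theorem card_filter_triple_eq_le {ι : Type*} [Fintype ι] [DecidableEq ι] {t : Finset ι}
    (ht : t.card = 3) :
    (Finset.univ.filter fun q : ι × ι × ι => ({q.1, q.2.1, q.2.2} : Finset ι) = t).card ≤ 6 := by
  obtain ⟨u, v, w, huv, huw, hvw, rfl⟩ := Finset.card_eq_three.1 ht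
  refine (Finset.card_le_card (t := {(u, v, w), (u, w, v), (v, u, w), (v, w, u), (w, u, v),
    (w, v, u)}) ?_).trans Finset.card_le_six
  rintro ⟨a, b, c⟩ h
  simp only [Finset.mem_filter, Finset.mem_univ, true_and] at h
  have ha : a ∈ ({u, v, w} : Finset ι) := by rw [← h]; simp
  have hb : b ∈ ({u, v, w} : Finset ι) := by rw [← h]; simp
  have hc : c ∈ ({u, v, w} : Finset ι) := by rw [← h]; simp
  have hu : u ∈ ({a, b, c} : Finset ι) := by rw [h]; simp
  have hv : v ∈ ({a, b, c} : Finset ι) := by rw [h]; simp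
  have hw : w ∈ ({a, b, c} : Finset ι) := by rw [h]; simp
  simp only [Finset.mem_insert, Finset.mem_singleton, Prod.mk.injEq] at *
  grind

theorem card_filter_triple_card_ne_le {ι : Type*} [Fintype ι] [DecidableEq ι] :
    (Finset.univ.filter fun q : ι × ι × ι =>
      ({q.1, q.2.1, q.2.2} : Finset ι).card ≠ 3).card ≤ 3 * Fintype.card ι ^ 2 := by
  have himg : ∀ f : ι × ι → ι × ι × ι, (Finset.univ.image f).card ≤ Fintype.card ι ^ 2 := fun f =>
    Finset.card_image_le.trans_eq (by simp [sq])
  have hsub : (Finset.univ.filter fun q : ι × ι × ι => ({q.1, q.2.1, q.2.2} : Finset ι).card ≠ 3) ⊆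
      Finset.univ.image (fun q : ι × ι => (q.1, q.1, q.2)) ∪
      (Finset.univ.image (fun q : ι × ι => (q.1, q.2, q.1)) ∪
      Finset.univ.image (fun q : ι × ι => (q.2, q.1, q.1))) := by
    rintro ⟨a, b, c⟩ h
    simp only [Finset.mem_filter, Finset.mem_univ, true_and] at h
    simp only [Finset.mem_union, Finset.mem_image, Finset.mem_univ, true_and, Prod.exists,
      Prod.mk.injEq]
    by_cases hab : a = b
    · exact .inl ⟨a, c, rfl, hab, rfl⟩
    by_cases hac : a = c
    · exact .inr (.inl ⟨a, b, rfl, rfl, hac⟩)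
    by_cases hbc : b = c
    · exact .inr (.inr ⟨b, a, rfl, rfl, hbc⟩)
    exact absurd (Finset.card_eq_three.2 ⟨a, b, c, hab, hac, hbc, rfl⟩) h
  have h1 := Finset.card_le_card hsub
  have h2 := Finset.card_union_le (Finset.univ.image (fun q : ι × ι => (q.1, q.1, q.2)))
    (Finset.univ.image (fun q : ι × ι => (q.1, q.2, q.1)) ∪
      Finset.univ.image (fun q : ι × ι => (q.2, q.1, q.1)))
  have h3 := Finset.card_union_le (Finset.univ.image (fun q : ι × ι => (q.1, q.2, q.1)))
    (Finset.univ.image (fun q : ι × ι => (q.2, q.1, q.1)))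
  linarith [himg fun q => (q.1, q.1, q.2), himg fun q => (q.1, q.2, q.1),
    himg fun q => (q.2, q.1, q.1)]

open Classical in
/-- A property of triangles, summed over ordered triples of vertices. -/
theorem sum_triples_le {ι : Type*} [Fintype ι] (Q : Finset ι → Prop) :
    ∑ a, ∑ b, ∑ c, (if Q {a, b, c} then (1 : ℝ) else 0) ≤
      6 * ((Finset.univ.powersetCard 3).filter Q).card + 3 * (Fintype.card ι : ℝ) ^ 2 := by
  let f : ι × ι × ι → Finset ι := fun q => {q.1, q.2.1, q.2.2}
  have hsum : ∑ a, ∑ b, ∑ c, (if Q {a, b, c} then (1 : ℝ) else 0) =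
      (Finset.univ.filter fun q => Q (f q)).card := by
    rw [← Finset.sum_boole, Fintype.sum_prod_type]
    exact Finset.sum_congr rfl fun a _ =>
      (Fintype.sum_prod_type fun y => if Q (f (a, y)) then (1 : ℝ) else 0).symm
  have hsplit := Finset.card_filter_add_card_filter_not (s := Finset.univ.filter fun q => Q (f q))
    (fun q => (f q).card = 3)
  have hdeg : ((Finset.univ.filter fun q => Q (f q)).filter fun q => ¬ (f q).card = 3).card ≤
      3 * Fintype.card ι ^ 2 :=
    (Finset.card_le_card (Finset.filter_subset_filter _ (Finset.filter_subset _ _))).trans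
      card_filter_triple_card_ne_le
  have hmain : ((Finset.univ.filter fun q => Q (f q)).filter fun q => (f q).card = 3).card ≤
      6 * ((Finset.univ.powersetCard 3).filter Q).card := by
    refine Finset.card_le_mul_card_image_of_maps_to (f := f) (fun q hq => ?_) 6 fun t ht => ?_
    · simp only [Finset.mem_filter, Finset.mem_univ, true_and, Finset.mem_powersetCard_univ] at hq ⊢
      exact hq.symm
    · rw [Finset.mem_filter, Finset.mem_powersetCard_univ] at ht
      refine (Finset.card_le_card ?_).trans (card_filter_triple_eq_le ht.1)
      exact Finset.filter_subset_filter _ (Finset.subset_univ _)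
  rw [hsum]
  have : (Finset.univ.filter fun q => Q (f q)).card ≤
      6 * ((Finset.univ.powersetCard 3).filter Q).card + 3 * Fintype.card ι ^ 2 := by omega
  exact_mod_cast this

theorem overlap_bound_le {n : ℕ} (hn : 14 ≤ n) {N : ℝ}
    (h : 48 * ((n : ℝ) * (1 / 6 - 1 / (4 * (n : ℝ) ^ 3))) ^ 3 ≤ 6 * N + 3 * (n : ℝ) ^ 2) :
    (2 / 9 - 3 / n : ℝ) * (n.choose 3) ≤ N := by
  have hn' : (14 : ℝ) ≤ n := by exact_mod_cast hn
  have hchoose : (n.choose 3 : ℝ) = n * (n - 1) * (n - 2) / 6 := by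
    obtain ⟨k, rfl⟩ := Nat.exists_eq_add_of_le' (show 2 ≤ n by omega)
    have h3 := Nat.descFactorial_eq_factorial_mul_choose (k + 2) 3
    simp only [Nat.descFactorial, Nat.factorial] at h3
    have h4 : k * ((k + 1) * (k + 2)) = 6 * (k + 2).choose 3 := by simpa using h3
    have h5 : (k : ℝ) * ((k + 1) * (k + 2)) = 6 * ((k + 2).choose 3 : ℕ) := by exact_mod_cast h4
    push_cast
    linarith
  have hlow : 2 / 9 * (n : ℝ) ^ 3 - 1 ≤ 48 * ((n : ℝ) * (1 / 6 - 1 / (4 * (n : ℝ) ^ 3))) ^ 3 := by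
    obtain ⟨e, he⟩ : ∃ e : ℝ, e = 1 / (4 * (n : ℝ) ^ 3) := ⟨_, rfl⟩
    have he0 : 0 ≤ e := by rw [he]; positivity
    have hne : 4 * ((n : ℝ) ^ 3 * e) = 1 := by rw [he]; field_simp
    have h3 : (0 : ℝ) ≤ (n : ℝ) ^ 3 := by positivity
    have h1 : 1 ≤ (n : ℝ) ^ 3 := one_le_pow₀ (by linarith)
    have he1 : e ≤ 1 / 2 := by nlinarith
    have hcube : 1 / 216 - e / 12 ≤ (1 / 6 - e) ^ 3 := by
      nlinarith [mul_nonneg (mul_nonneg he0 he0) (sub_nonneg.2 he1)]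
    rw [← he, mul_pow]
    nlinarith [mul_le_mul_of_nonneg_left hcube h3]
  rw [hchoose]
  have : (2 / 9 - 3 / n : ℝ) * (n * (n - 1) * (n - 2) / 6) =
      (2 * n - 27) * (n - 1) * (n - 2) / 54 := by field_simp; ring
  rw [this]
  nlinarith

theorem overlap_bound_nonpos {n : ℕ} (hn : n < 14) : (2 / 9 - 3 / n : ℝ) * (n.choose 3) ≤ 0 := by
  rcases n.eq_zero_or_pos with rfl | h
  · simp
  refine mul_nonpos_of_nonpos_of_nonneg ?_ (Nat.cast_nonneg _)
  have h0 : (0 : ℝ) < n := by exact_mod_cast h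
  have h1 : (n : ℝ) ≤ 13 := by exact_mod_cast Nat.le_of_lt_succ hn
  rw [sub_nonpos, le_div_iff₀ h0]
  linarith

open Classical in
theorem exists_overlap_bound_le_card_cthickening {n : ℕ} (hn : 14 ≤ n)
    (x : Fin n → EuclideanSpace ℝ (Fin 2)) {δ : ℝ} (hδ : 0 < δ) :
    ∃ r, (2 / 9 - 3 / n : ℝ) * (n.choose 3) ≤
      (((Finset.univ : Finset (Fin n)).powersetCard 3).filter
        fun t : Finset (Fin n) => r ∈ Metric.cthickening δ (convexHull ℝ (x '' t))).card := by
  have : Nonempty (Fin n) := ⟨⟨0, by omega⟩⟩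
  have hn' : (14 : ℝ) ≤ n := by exact_mod_cast hn
  have hη : 1 / (4 * (n : ℝ) ^ 3) ≤ 1 / 6 := by
    have hsq : (14 : ℝ) ≤ (n : ℝ) ^ 3 := hn'.trans (le_self_pow₀ (by linarith) (by norm_num))
    exact one_div_le_one_div_of_le (by norm_num) (by linarith)
  obtain ⟨r, hr⟩ := exists_sum_triangles_ge x hδ (by positivity) hη
  refine ⟨r, overlap_bound_le hn ?_⟩
  have hle := sum_triples_le fun t : Finset (Fin n) =>
    r ∈ Metric.cthickening δ (convexHull ℝ (x '' t))
  simp only [Finset.coe_insert, Finset.coe_singleton, Set.image_insert_eq, Set.image_singleton,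
    Fintype.card_fin] at hle hr
  exact hr.trans hle

open Classical in
theorem exists_overlap_bound_le_card (n : ℕ) (x : Fin n → EuclideanSpace ℝ (Fin 2)) :
    ∃ r : EuclideanSpace ℝ (Fin 2), (2 / 9 - 3 / n : ℝ) * (n.choose 3) ≤
      (((Finset.univ : Finset (Fin n)).powersetCard 3).filter
        fun t : Finset (Fin n) => r ∈ convexHull ℝ (x '' t)).card := by
  rcases le_or_gt ((2 / 9 - 3 / n : ℝ) * (n.choose 3)) 0 with h0 | h0
  · exact ⟨0, h0.trans (Nat.cast_nonneg _)⟩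
  have hn : 14 ≤ n := by
    by_contra! hlt
    exact h0.not_ge (overlap_bound_nonpos hlt)
  exact exists_le_card_filter_mem ((Finset.univ : Finset (Fin n)).powersetCard 3)
    (K := fun t => convexHull ℝ (x '' t))
    (fun t _ => (t.finite_toSet.image x).isCompact_convexHull ℝ) h0
    fun δ hδ => exists_overlap_bound_le_card_cthickening hn x hδ

open Classical in
/-- Affine instance of Gromov's overlap theorem: some point of the plane is
covered by at least a `2/9 - 3/n` fraction of the `n.choose 3` triangles
spanned by `n` points in general position. -/
theorem stmt_10 (n : ℕ) (x : Fin n → EuclideanSpace ℝ (Fin 2))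
    (hx : InGeneralPosition x) :
    ∃ r : EuclideanSpace ℝ (Fin 2),
      (2 / 9 - 3 / n : ℝ) * (n.choose 3) ≤
        (((Finset.univ : Finset (Fin n)).powersetCard 3).filter
          (fun t => r ∈ convexHull ℝ (x '' ↑t))).card := by
  obtain ⟨r, hr⟩ := exists_overlap_bound_le_card n x
  refine ⟨r, hr.trans (Nat.cast_le.2 (Finset.card_le_card_of_injOn (fun t => (t : Set (Fin n)))
    (fun t ht => ?_) Finset.coe_injective.injOn))⟩
  rw [Finset.mem_coe, Finset.mem_filter] at ht ⊢
  refine ⟨?_, ht.2⟩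
  simp only [Finset.bind_def, Finset.pure_def, Finset.mem_sup, Finset.mem_singleton]
  exact ⟨t, ht.1, rfl⟩
end

section
/- (Affine instance of the weighted overlap theorem) Let V be a finite set with |V| = n ≥ 3, let x : V → ℝ² assign to the elements of V points in general position, and let p be a probability distribution on V. Then there exists a point r ∈ ℝ² such that Σ_{t} p(t) ≥ 1/13 − 3/(13(n−1)), where the sum is over all 3-element subsets t ⊆ V with r ∈ conv{x(v) : v ∈ t}. -/
/-- The determinant of the pair `(a, b)`, as a linear form in `b`. -/
noncomputable def crossForm (a : EuclideanSpace ℝ (Fin 2)) : EuclideanSpace ℝ (Fin 2) →ₗ[ℝ] ℝ :=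
  a 0 • (EuclideanSpace.proj (𝕜 := ℝ) (1 : Fin 2)).toLinearMap -
    a 1 • (EuclideanSpace.proj (𝕜 := ℝ) (0 : Fin 2)).toLinearMap

lemma crossForm_apply (a b : EuclideanSpace ℝ (Fin 2)) :
    crossForm a b = a 0 * b 1 - a 1 * b 0 := by
  simp [crossForm]

/-- The inner product of `a` and `b`, as a linear form in `b`. -/
noncomputable def dotForm (a : EuclideanSpace ℝ (Fin 2)) : EuclideanSpace ℝ (Fin 2) →ₗ[ℝ] ℝ :=
  a 0 • (EuclideanSpace.proj (𝕜 := ℝ) (0 : Fin 2)).toLinearMap +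
    a 1 • (EuclideanSpace.proj (𝕜 := ℝ) (1 : Fin 2)).toLinearMap

lemma dotForm_apply (a b : EuclideanSpace ℝ (Fin 2)) :
    dotForm a b = a 0 * b 0 + a 1 * b 1 := by
  simp [dotForm]

lemma dotForm_self_pos {a : EuclideanSpace ℝ (Fin 2)} (ha : a ≠ 0) : 0 < dotForm a a := by
  rw [dotForm_apply]
  by_contra! h
  apply ha
  ext i
  fin_cases i
  · have : a 0 * a 0 = 0 := by nlinarith [mul_self_nonneg (a 0), mul_self_nonneg (a 1)]
    exact mul_self_eq_zero.1 this
  · have : a 1 * a 1 = 0 := by nlinarith [mul_self_nonneg (a 0), mul_self_nonneg (a 1)]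
    exact mul_self_eq_zero.1 this

/-- A point is not in the convex hull of points lying lexicographically beyond it. -/
lemma notMem_convexHull_of_lex {E : Type*} [AddCommGroup E] [Module ℝ E] {s : Set E} {r : E}
    (f g : E →ₗ[ℝ] ℝ)
    (h : ∀ z ∈ s, f (z - r) < 0 ∨ f (z - r) = 0 ∧ 0 < g (z - r)) : r ∉ convexHull ℝ s := by
  have hconv : Convex ℝ {z : E | f (z - r) < 0 ∨ f (z - r) = 0 ∧ 0 < g (z - r)} := by
    rw [convex_iff_forall_pos]
    intro y hy z hz a b ha hb hab
    have hsub : a • y + b • z - r = a • (y - r) + b • (z - r) := by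
      rw [smul_sub, smul_sub, sub_add_sub_comm, ← add_smul, hab, one_smul]
    simp only [Set.mem_ofPred_eq, hsub, map_add, map_smul, smul_eq_mul] at hy hz ⊢
    rcases hy with hy | ⟨hy, hy'⟩ <;> rcases hz with hz | ⟨hz, hz'⟩
    · exact Or.inl (by nlinarith)
    · exact Or.inl (by rw [hz]; nlinarith)
    · exact Or.inl (by rw [hy]; nlinarith)
    · exact Or.inr ⟨by rw [hy, hz]; ring, by positivity⟩
  intro hr
  have hmem : f (r - r) < 0 ∨ f (r - r) = 0 ∧ 0 < g (r - r) := convexHull_min h hconv hr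
  simp at hmem

/-- **Centerpoint theorem** in the plane, in terms of convex hulls: some point stays in the convex
hull after the removal of any `m` points, provided `3 * m < n`. -/
lemma exists_centerpoint {V : Type*} [Fintype V] [DecidableEq V]
    (x : V → EuclideanSpace ℝ (Fin 2)) (m : ℕ) (hm : 3 * m < Fintype.card V) :
    ∃ r, ∀ B : Finset V, B.card ≤ m → r ∈ convexHull ℝ (x '' (↑B)ᶜ) := by
  obtain ⟨r, hr⟩ := Convex.helly_theorem' (𝕜 := ℝ)
    (F := fun B : Finset V => convexHull ℝ (x '' (↑B)ᶜ))
    (s := Finset.univ.filter fun B : Finset V => B.card ≤ m)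
    (fun _ _ => convex_convexHull ℝ _) (by
      intro I hI hI3
      rw [finrank_euclideanSpace_fin] at hI3
      have hcard : (I.biUnion id).card < Fintype.card V := by
        refine lt_of_le_of_lt (Finset.card_biUnion_le_card_mul I id m fun B hB => ?_)
          (lt_of_le_of_lt (Nat.mul_le_mul_right m hI3) hm)
        simpa using hI hB
      obtain ⟨v, hv⟩ : ∃ v, v ∉ I.biUnion id := by
        by_contra! h
        exact hcard.ne (by rw [Finset.eq_univ_iff_forall.2 h, Finset.card_univ])
      refine ⟨x v, Set.mem_iInter₂.2 fun B hB => subset_convexHull ℝ _ ⟨v, fun hvB => ?_, rfl⟩⟩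
      exact hv (Finset.mem_biUnion.2 ⟨B, hB, hvB⟩))
  exact ⟨r, fun B hB => Set.mem_iInter₂.1 hr B (by simpa using hB)⟩

/-- If `f u` plus the rank of `u` exceeds `k` for all `u` in a set of at least `k` elements, then
the sum of `f` is at least `(k + 1) * k / 2`. -/
lemma succ_mul_le_two_mul_sum_of_rank {α : Type*} [DecidableEq α] (key : α → ℝ) (f : α → ℕ)
    (k : ℕ) (L : Finset α) (hk : k ≤ L.card)
    (h : ∀ u ∈ L, k + 1 ≤ f u + (L.filter fun w => key w < key u).card) :
    (k + 1) * k ≤ 2 * ∑ u ∈ L, f u := by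
  induction k generalizing L with
  | zero => simp
  | succ k ih =>
    obtain ⟨u, hu, hmin⟩ := L.exists_min_image key (Finset.card_pos.1 (by omega))
    have hfu : k + 2 ≤ f u := by
      have := h u hu
      rwa [Finset.filter_false_of_mem fun w hw => not_lt.2 (hmin w hw), Finset.card_empty] at this
    have herase := ih (L.erase u) (by rw [Finset.card_erase_of_mem hu]; omega) (by
      intro w hw
      have h1 := h w (Finset.mem_of_mem_erase hw)
      have h2 : (L.filter fun z => key z < key w).card ≤
          ((L.erase u).filter fun z => key z < key w).card + 1 := by
        rw [Finset.filter_erase]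
        exact Nat.sub_le_iff_le_add.1 Finset.pred_card_le_card_erase
      omega)
    rw [← Finset.add_sum_erase L f hu]
    nlinarith

/-- A point `r` with respect to which `a`, `b`, `c` are weakly positively oriented in cyclic order
lies in the triangle they span. -/
lemma mem_convexHull_of_crossForm {a b c r : EuclideanSpace ℝ (Fin 2)}
    {s : Set (EuclideanSpace ℝ (Fin 2))} (ha : a ∈ s) (hb : b ∈ s) (hc : c ∈ s)
    (hab : 0 < crossForm (a - r) (b - r)) (hbc : 0 ≤ crossForm (b - r) (c - r))
    (hac : crossForm (a - r) (c - r) ≤ 0) : r ∈ convexHull ℝ s := by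
  set α := crossForm (b - r) (c - r) with hα
  set β := -crossForm (a - r) (c - r) with hβ
  set γ := crossForm (a - r) (b - r) with hγ
  have hβ0 : 0 ≤ β := by linarith
  have hS : 0 < α + β + γ := by linarith
  have hr : r = (α / (α + β + γ)) • a + (β / (α + β + γ)) • b + (γ / (α + β + γ)) • c := by
    have key : (α + β + γ) • r = α • a + β • b + γ • c := by
      ext i
      fin_cases i <;> simp [hα, hβ, hγ, crossForm_apply] <;> ring
    rw [div_eq_inv_mul, div_eq_inv_mul, div_eq_inv_mul, mul_smul, mul_smul, mul_smul,
      ← smul_add, ← smul_add, ← key, inv_smul_smul₀ hS.ne']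
  have hmem := (convex_convexHull ℝ s).sum_mem (t := Finset.univ)
    (w := ![α / (α + β + γ), β / (α + β + γ), γ / (α + β + γ)]) (z := ![a, b, c])
    (by
      intro i _
      fin_cases i
      · exact div_nonneg hbc hS.le
      · exact div_nonneg hβ0 hS.le
      · exact div_nonneg hab.le hS.le)
    (by
      simp only [Fin.sum_univ_three, Matrix.cons_val]
      field_simp)
    (by
      intro i _
      apply subset_convexHull
      fin_cases i
      · exact ha
      · exact hb
      · exact hc)
  simp only [Fin.sum_univ_three, Matrix.cons_val] at hmem
  rwa [← hr] at hmem

/-- Points of the plane on a common line through `r` are collinear. -/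
lemma collinear_of_crossForm_eq_zero {a b c r : EuclideanSpace ℝ (Fin 2)} (ha : a ≠ r)
    (hb : crossForm (a - r) (b - r) = 0) (hc : crossForm (a - r) (c - r) = 0) :
    Collinear ℝ {a, b, c} := by
  have hpos := dotForm_self_pos (sub_ne_zero.2 ha)
  have key : ∀ z, crossForm (a - r) (z - r) = 0 →
      ∃ t : ℝ, z = t • (a - r) +ᵥ r := by
    intro z hz
    refine ⟨dotForm (a - r) (z - r) / dotForm (a - r) (a - r), ?_⟩
    rw [vadd_eq_add, ← sub_eq_iff_eq_add, div_eq_inv_mul, mul_smul, eq_inv_smul_iff₀ hpos.ne']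
    generalize z - r = c at hz ⊢
    generalize a - r = b at hz ⊢
    rw [crossForm_apply] at hz
    ext i
    fin_cases i
    · simp only [dotForm_apply, PiLp.smul_apply, smul_eq_mul, Fin.zero_eta]
      linear_combination (-b 1) * hz
    · simp only [dotForm_apply, PiLp.smul_apply, smul_eq_mul, Fin.mk_one]
      linear_combination b 0 * hz
  rw [collinear_iff_exists_forall_eq_smul_vadd]
  refine ⟨r, a - r, ?_⟩
  rintro z (rfl | rfl | rfl)
  · exact ⟨1, by simp⟩
  · exact key _ hb
  · exact key _ hc

/-- Each vertex lies in at least `(m + 1) * m / 2` triangles containing a point of depth greater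
than `m`. -/
lemma succ_mul_le_two_mul_card_triangles {V : Type*} [Fintype V] [DecidableEq V]
    {x : V → EuclideanSpace ℝ (Fin 2)} (hx : InGeneralPosition x) {m : ℕ}
    (hm : m + 2 ≤ Fintype.card V) {r : EuclideanSpace ℝ (Fin 2)}
    (hr : ∀ B : Finset V, B.card ≤ m → r ∈ convexHull ℝ (x '' (↑B)ᶜ)) (v : V)
    (T : Finset (Finset V))
    (hT : ∀ t : Finset V, t.card = 3 → v ∈ t → r ∈ convexHull ℝ (x '' ↑t) → t ∈ T) :
    (m + 1) * m ≤ 2 * T.card := by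
  classical
  by_cases hv : x v = r
  · have hinj : Set.InjOn (insert v) (↑((Finset.univ.erase v).powersetCard 2) :
        Set (Finset V)) := by
      intro s hs t ht hst
      have hs' : v ∉ s := fun h => by simpa using (Finset.mem_powersetCard.1 hs).1 h
      have ht' : v ∉ t := fun h => by simpa using (Finset.mem_powersetCard.1 ht).1 h
      rw [← Finset.erase_insert hs', ← Finset.erase_insert ht']
      exact congrArg (Finset.erase · v) hst
    have hcard := Finset.card_le_card_of_injOn (t := T) (insert v) (by
      intro s hs
      have hs' : v ∉ s := fun h => by simpa using (Finset.mem_powersetCard.1 hs).1 h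
      refine hT _ ?_ (Finset.mem_insert_self v s) ?_
      · rw [Finset.card_insert_of_notMem hs', (Finset.mem_powersetCard.1 hs).2]
      · exact subset_convexHull ℝ _ ⟨v, by simp, hv⟩) hinj
    rw [Finset.card_powersetCard, Finset.card_erase_of_mem (Finset.mem_univ v),
      Finset.card_univ] at hcard
    have hmono : (m + 1).choose 2 ≤ (Fintype.card V - 1).choose 2 :=
      Nat.choose_le_choose 2 (by omega)
    have htri : (m + 1) * m = (m + 1).choose 2 * 2 := by
      rw [Nat.choose_two_right, ← Finset.sum_range_id, Finset.sum_range_id_mul_two, Nat.add_sub_cancel]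
    omega
  set y : V → EuclideanSpace ℝ (Fin 2) := fun w => x w - r with hy
  have hyv : 0 < dotForm (y v) (y v) := dotForm_self_pos (sub_ne_zero.2 hv)
  set L : Finset V := Finset.univ.filter fun w => 0 < crossForm (y v) (y w) with hL
  set good : V → Finset V := fun u => Finset.univ.filter fun w =>
    crossForm (y v) (y w) ≤ 0 ∧ 0 ≤ crossForm (y u) (y w) with hgood
  set N : Finset V := Finset.univ.filter fun w =>
    crossForm (y v) (y w) = 0 ∧ dotForm (y v) (y w) ≤ 0 with hN
  have hLN : m + 1 ≤ (L ∪ N).card := by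
    by_contra! hlt
    refine notMem_convexHull_of_lex (crossForm (y v)) (dotForm (y v)) ?_ (hr (L ∪ N) (by omega))
    rintro _ ⟨w, hw, rfl⟩
    simp only [hL, hN, Set.mem_compl_iff, Finset.mem_coe, Finset.mem_union, Finset.mem_filter,
      Finset.mem_univ, true_and, not_or, not_lt, not_and, not_le] at hw
    exact hw.1.lt_or_eq.imp_right fun h => ⟨h, hw.2 h⟩
  have hN1 : N.card ≤ 1 := by
    rw [Finset.card_le_one]
    intro a ha b hb
    simp only [hN, Finset.mem_filter, Finset.mem_univ, true_and] at ha hb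
    by_contra hab
    refine hx.2 v a b ?_ ?_ hab (collinear_of_crossForm_eq_zero hv ha.1 hb.1)
    · rintro rfl
      exact hyv.not_ge ha.2
    · rintro rfl
      exact hyv.not_ge hb.2
  have hLcard : m ≤ L.card := by
    have := Finset.card_union_le L N
    omega
  have hrank : ∀ u ∈ L, m + 1 ≤ (good u).card + (L.filter fun w =>
      dotForm (y v) (y w) / crossForm (y v) (y w) <
        dotForm (y v) (y u) / crossForm (y v) (y u)).card := by
    intro u hu
    have hu' : 0 < crossForm (y v) (y u) := by simpa [hL] using hu
    have hfilter : (L.filter fun w => dotForm (y v) (y w) / crossForm (y v) (y w) <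
        dotForm (y v) (y u) / crossForm (y v) (y u)) =
        L.filter fun w => 0 < crossForm (y u) (y w) := by
      refine Finset.filter_congr fun w hw => ?_
      have hw' : 0 < crossForm (y v) (y w) := by simpa [hL] using hw
      have hid : dotForm (y v) (y u) * crossForm (y v) (y w) -
          dotForm (y v) (y w) * crossForm (y v) (y u) =
          dotForm (y v) (y v) * crossForm (y u) (y w) := by
        simp only [dotForm_apply, crossForm_apply]
        ring
      rw [div_lt_div_iff₀ hw' hu', ← sub_pos, hid, mul_pos_iff_of_pos_left hyv]
    rw [hfilter]
    by_contra! hlt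
    refine notMem_convexHull_of_lex (crossForm (y u)) (crossForm (y v)) ?_
      (hr (good u ∪ L.filter fun w => 0 < crossForm (y u) (y w))
        ((Finset.card_union_le _ _).trans (by omega)))
    rintro _ ⟨w, hw, rfl⟩
    change crossForm (y u) (y w) < 0 ∨ crossForm (y u) (y w) = 0 ∧ 0 < crossForm (y v) (y w)
    simp only [hL, hgood, Set.mem_compl_iff, Finset.mem_coe, Finset.mem_union, Finset.mem_filter,
      Finset.mem_univ, true_and, not_or, not_lt, not_and, not_le] at hw
    rcases le_or_gt (crossForm (y v) (y w)) 0 with h | h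
    · exact Or.inl (hw.1 h)
    · exact (hw.2 h).lt_or_eq.imp_right fun h' => ⟨h', h⟩
  refine (succ_mul_le_two_mul_sum_of_rank _ (fun u => (good u).card) m L hLcard hrank).trans ?_
  rw [← Finset.card_sigma]
  have hmem : ∀ e ∈ L.sigma good, 0 < crossForm (y v) (y e.1) ∧
      crossForm (y v) (y e.2) ≤ 0 ∧ 0 ≤ crossForm (y e.1) (y e.2) ∧ e.2 ≠ v := by
    rintro ⟨u, w⟩ h
    simp only [hL, hgood, Finset.mem_sigma, Finset.mem_filter, Finset.mem_univ, true_and] at h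
    refine ⟨h.1, h.2.1, h.2.2, ?_⟩
    rintro rfl
    have h1 := h.1
    have h2 := h.2.2
    rw [crossForm_apply] at h1 h2
    linarith
  have hself : crossForm (y v) (y v) = 0 := by rw [crossForm_apply]; ring
  refine Nat.mul_le_mul_left 2 (Finset.card_le_card_of_injOn
    (fun e : (_ : V) × V => {v, e.1, e.2}) ?_ ?_)
  · rintro ⟨u, w⟩ he
    obtain ⟨hu, hw, huw, hwv⟩ := hmem _ he
    dsimp only at hu hw huw hwv
    refine hT _ ?_ (by simp) ?_
    · rw [Finset.card_eq_three]
      refine ⟨v, u, w, ?_, hwv.symm, ?_, rfl⟩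
      · rintro rfl
        exact hu.ne' hself
      · rintro rfl
        exact hu.not_ge hw
    · exact mem_convexHull_of_crossForm (Set.mem_image_of_mem x (by simp))
        (Set.mem_image_of_mem x (by simp)) (Set.mem_image_of_mem x (by simp)) hu huw hw
  · rintro ⟨u, w⟩ he ⟨u', w'⟩ he' heq
    obtain ⟨hu, hw, -, hwv⟩ := hmem _ he
    obtain ⟨hu', hw', -, hwv'⟩ := hmem _ he'
    dsimp only at hu hw hwv hu' hw' hwv' heq
    have huu : u = u' := by
      have : u ∈ ({v, u', w'} : Finset V) := heq ▸ by simp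
      simp only [Finset.mem_insert, Finset.mem_singleton] at this
      rcases this with rfl | h | rfl
      · exact absurd hself hu.ne'
      · exact h
      · exact absurd hu hw'.not_gt
    have hww : w = w' := by
      have : w ∈ ({v, u', w'} : Finset V) := heq ▸ by simp
      simp only [Finset.mem_insert, Finset.mem_singleton] at this
      rcases this with h | rfl | h
      · exact absurd h hwv
      · exact absurd hu' hw.not_gt
      · exact h
    rw [huu, hww]

open Classical in
/-- The weighted overlap theorem for affine maps, with the triangles indexed by finsets. -/
lemma exists_weighted_overlap {V : Type*} [Fintype V] [DecidableEq V]
    (n : ℕ) (hn : Fintype.card V = n) (hn3 : 3 ≤ n)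
    (x : V → EuclideanSpace ℝ (Fin 2)) (hx : InGeneralPosition x)
    (p : V → ℝ) (hp0 : ∀ v, 0 ≤ p v) (hp1 : ∑ v, p v = 1) :
    ∃ r : EuclideanSpace ℝ (Fin 2),
      (1 / 13 - 3 / (13 * (n - 1)) : ℝ) ≤
        ∑ t ∈ ((Finset.univ : Finset V).powersetCard 3).filter
            (fun t : Finset V => r ∈ convexHull ℝ (x '' (t : Set V))),
          (∑ v ∈ t, p v) / ((n - 1).choose 2 : ℝ) := by
  obtain ⟨m, hm1, hm2⟩ : ∃ m, 3 * m < n ∧ n ≤ 3 * m + 3 := ⟨(n - 1) / 3, by omega, by omega⟩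
  obtain ⟨r, hr⟩ := exists_centerpoint x m (by omega)
  refine ⟨r, ?_⟩
  set G := ((Finset.univ : Finset V).powersetCard 3).filter
    (fun t : Finset V => r ∈ convexHull ℝ (x '' (t : Set V))) with hG
  have hcount : ∀ v, ((m + 1) * m / 2 : ℝ) ≤ ((G.filter fun t => v ∈ t).card : ℝ) := by
    intro v
    have h := succ_mul_le_two_mul_card_triangles hx (by omega) hr v (G.filter fun t => v ∈ t)
      fun t ht hvt hrt => by simp [hG, ht, hvt, hrt]
    have h' : ((m + 1) * m : ℝ) ≤ 2 * ((G.filter fun t => v ∈ t).card : ℝ) := by exact_mod_cast h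
    linarith
  have hswap : ∑ t ∈ G, ∑ v ∈ t, p v = ∑ v, p v * ((G.filter fun t => v ∈ t).card : ℝ) := by
    rw [Finset.sum_comm' (t' := Finset.univ) (s' := fun v => G.filter fun t => v ∈ t) (by simp)]
    exact Finset.sum_congr rfl fun v _ => by rw [Finset.sum_const, nsmul_eq_mul, mul_comm]
  have hsum : ((m + 1) * m / 2 : ℝ) ≤ ∑ t ∈ G, ∑ v ∈ t, p v := by
    have hscale : ((m + 1) * m / 2 : ℝ) = ∑ v, p v * ((m + 1) * m / 2) := by
      rw [← Finset.sum_mul, hp1, one_mul]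
    rw [hswap, hscale]
    exact Finset.sum_le_sum fun v _ => mul_le_mul_of_nonneg_left (hcount v) (hp0 v)
  have hn3' : (3 : ℝ) ≤ n := by exact_mod_cast hn3
  have hm2' : (n : ℝ) ≤ 3 * m + 3 := by exact_mod_cast hm2
  have hn1 : (0 : ℝ) < n - 1 := by linarith
  have hn2 : (0 : ℝ) < n - 2 := by linarith
  have hchoose : ((n - 1).choose 2 : ℝ) = (n - 1) * (n - 2) / 2 := by
    rw [Nat.cast_choose_two, Nat.cast_sub (by omega)]
    push_cast
    ring
  rw [← Finset.sum_div, hchoose, le_div_iff₀ (by positivity)]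
  refine le_trans ?_ hsum
  have hlhs : (1 / 13 - 3 / (13 * (n - 1)) : ℝ) * ((n - 1) * (n - 2) / 2) =
      (n - 4) * (n - 2) / 26 := by
    field_simp
    ring
  rw [hlhs]
  nlinarith [mul_nonneg (sub_nonneg.2 hm2') (by linarith : (0 : ℝ) ≤ 3 * m + 3 + n - 6),
    Nat.cast_nonneg (α := ℝ) m]

open Classical in
/-- Affine instance of the weighted overlap theorem: for any probability
distribution `p` on the vertices, some point of the plane is covered by a
collection of triangles of total weight at least `1/13 - 3/(13(n-1))`,
where the weight of a triangle `{u,v,w}` is `(p u + p v + p w)/(n-1).choose 2`. -/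
theorem stmt_11 {V : Type*} [Fintype V] [DecidableEq V]
    (n : ℕ) (hn : Fintype.card V = n) (hn3 : 3 ≤ n)
    (x : V → EuclideanSpace ℝ (Fin 2)) (hx : InGeneralPosition x)
    (p : V → ℝ) (hp0 : ∀ v, 0 ≤ p v) (hp1 : ∑ v, p v = 1) :
    ∃ r : EuclideanSpace ℝ (Fin 2),
      (1 / 13 - 3 / (13 * (n - 1)) : ℝ) ≤
        ∑ t ∈ ((Finset.univ : Finset V).powersetCard 3).filter
            (fun t => r ∈ convexHull ℝ (x '' ↑t)),
          (∑ v ∈ t, p v) / ((n - 1).choose 2 : ℝ) := by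
  obtain ⟨r, hr⟩ := exists_weighted_overlap n hn hn3 x hx p hp0 hp1
  refine ⟨r, hr.trans_eq ?_⟩
  have himage : (do
      let a ← (Finset.univ : Finset V).powersetCard 3
      pure (a : Set V)) =
      ((Finset.univ : Finset V).powersetCard 3).image (fun t : Finset V => (t : Set V)) := by
    ext s
    simp [Finset.bind_def, Finset.pure_def, eq_comm]
  rw [himage, Finset.filter_image, Finset.sum_image Finset.coe_injective.injOn]
  simp only [Finset.toFinset_coe]
end
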